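/- arXiv:1608.01630 — 16 statements merged into one kernel-verified Lean document; each statement's English description precedes it below -/
import Mathlib

section
/- Let N be a real number with 1 < N ≤ 2 and let Φ_N be the Young function defined by Φ_N(t) = t·(log t)^N for t ≥ e^{2N} and Φ_N(t) = (2N)^N·t for 0 ≤ t ≤ e^{2N}. Then for every real s ≥ (2N)^N and every real t ≥ 0 one has s·t − Φ_N(t) ≤ N·s^{1−1/N}·exp(s^{1/N}). Consequently the convex conjugate Φ̃_N(s) = sup_{t ≥ 0}(s·t − Φ_N(t)) satisfies Φ̃_N(s) ≤ N·s^{1−1/N}·exp(s^{1/N}) for all s ≥ (2N)^N. -/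
/-!
Write `s = a ^ N`. For `t = exp L ≥ exp (2 * N)`, the tangent-line inequality for the convex function
`x ↦ x ^ N` at `a` gives `a ^ N - L ^ N ≤ N * a ^ (N - 1) * (a - L)`, and `a - L ≤ exp (a - L)`
then yields the bound (`exp_mul_rpow_sub_le`). On the linear piece of `PhiN` the difference
`s * t - PhiN N t` is nondecreasing in `t`, because `(2 * N) ^ N ≤ s`, so the case `L = 2 * N`
of the same estimate suffices.
-/

/-- The Young function `Φ_N(t) = t (log t)^N` for `t ≥ e^{2N}`, `Φ_N(t) = (2N)^N t`
for `0 ≤ t ≤ e^{2N}`. -/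
noncomputable def PhiN (N t : ℝ) : ℝ :=
  if Real.exp (2 * N) ≤ t then t * Real.log t ^ N else (2 * N) ^ N * t

/-- The exponential form of the estimate: `t * (s - (log t) ^ N)` with `t = exp L`, `s = a ^ N`. -/
lemma exp_mul_rpow_sub_le {N a L : ℝ} (hN : 1 ≤ N) (ha : 0 < a) (hL : 0 ≤ L) :
    Real.exp L * (a ^ N - L ^ N) ≤ N * a ^ (N - 1) * Real.exp a := by
  have hpow : a ^ N = a ^ (N - 1) * a := by
    rw [Real.rpow_sub_one ha.ne']
    field_simp
  have hb0 : 0 ≤ a ^ (N - 1) := Real.rpow_nonneg ha.le _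
  have tangent : a ^ N - L ^ N ≤ N * a ^ (N - 1) * (a - L) := by
    -- Bernoulli's inequality at `L / a - 1`, rescaled by `a ^ N`.
    have hx : -1 ≤ L / a - 1 := by
      have := div_nonneg hL ha.le
      linarith
    have hB := one_add_mul_self_le_rpow_one_add hx hN
    rw [add_sub_cancel, Real.div_rpow hL ha.le, le_div_iff₀ (Real.rpow_pos_of_pos ha N)] at hB
    have hexp : (1 + N * (L / a - 1)) * a ^ N = a ^ N - N * a ^ (N - 1) * (a - L) := by
      rw [hpow]
      field_simp
      ring
    linarith
  have hexp : Real.exp L * (a - L) ≤ Real.exp a := by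
    have h : a - L ≤ Real.exp (a - L) := by linarith [Real.add_one_le_exp (a - L)]
    calc Real.exp L * (a - L) ≤ Real.exp L * Real.exp (a - L) :=
          mul_le_mul_of_nonneg_left h (Real.exp_pos L).le
      _ = Real.exp a := by rw [← Real.exp_add, add_sub_cancel]
  calc Real.exp L * (a ^ N - L ^ N) ≤ Real.exp L * (N * a ^ (N - 1) * (a - L)) :=
        mul_le_mul_of_nonneg_left tangent (Real.exp_pos L).le
    _ = N * a ^ (N - 1) * (Real.exp L * (a - L)) := by ring
    _ ≤ N * a ^ (N - 1) * Real.exp a :=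
        mul_le_mul_of_nonneg_left hexp (mul_nonneg (by linarith) hb0)

/-- For `1 < N ≤ 2` and `s ≥ (2N)^N`, we have `s·t − Φ_N(t) ≤ N·s^{1−1/N}·exp(s^{1/N})`
for all `t ≥ 0`; consequently the convex conjugate
`Φ̃_N(s) = sup_{t ≥ 0} (s·t − Φ_N(t))` satisfies the same bound. -/
theorem PhiN_conjugate_bound (N : ℝ) (hN1 : 1 < N) (hN2 : N ≤ 2) (s : ℝ)
    (hs : (2 * N) ^ N ≤ s) :
    (∀ t : ℝ, 0 ≤ t → s * t - PhiN N t ≤ N * s ^ (1 - 1 / N) * Real.exp (s ^ (1 / N))) ∧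
    sSup {y : ℝ | ∃ t : ℝ, 0 ≤ t ∧ y = s * t - PhiN N t} ≤
      N * s ^ (1 - 1 / N) * Real.exp (s ^ (1 / N)) := by
  have hN0 : 0 < N := by linarith
  have hs0 : 0 < s := lt_of_lt_of_le (Real.rpow_pos_of_pos (by linarith) N) hs
  have key : ∀ L : ℝ, 0 ≤ L →
      Real.exp L * (s - L ^ N) ≤ N * s ^ (1 - 1 / N) * Real.exp (s ^ (1 / N)) := by
    intro L hL
    have h := exp_mul_rpow_sub_le hN1.le (Real.rpow_pos_of_pos hs0 (1 / N)) hL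
    have he : 1 / N * (N - 1) = 1 - 1 / N := by
      field_simp
    rw [← Real.rpow_mul hs0.le, ← Real.rpow_mul hs0.le, one_div_mul_cancel hN0.ne',
      Real.rpow_one, he] at h
    exact h
  have bound : ∀ t : ℝ, 0 ≤ t →
      s * t - PhiN N t ≤ N * s ^ (1 - 1 / N) * Real.exp (s ^ (1 / N)) := by
    intro t ht
    unfold PhiN
    split_ifs with h
    · have ht0 : 0 < t := (Real.exp_pos _).trans_le h
      have hL : 2 * N ≤ Real.log t := (Real.le_log_iff_exp_le ht0).2 h
      have hk := key (Real.log t) (by linarith)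
      rw [Real.exp_log ht0] at hk
      linarith
    · have hk := key (2 * N) (by linarith)
      have hmono : t * (s - (2 * N) ^ N) ≤ Real.exp (2 * N) * (s - (2 * N) ^ N) :=
        mul_le_mul_of_nonneg_right (not_le.1 h).le (by linarith)
      linarith
  refine ⟨bound, csSup_le ⟨_, 0, le_rfl, rfl⟩ ?_⟩
  rintro y ⟨t, ht, rfl⟩
  exact bound t ht
end

section
/- Let ε > 0, let N be a real number with 1 + ε/2 < N ≤ 2, and let A, γ ∈ ℝ. Then there exists a real number B (depending only on ε, N, A, γ) with the following property: for every sequence (b_k)_{k≥0} of real numbers such that b_0 ≥ B and such that for every k ≥ 0, if b_k > (2+ε)·log(k+2) + γ then b_{k+1} ≥ b_k − (1+ε/2)·log(k+1) + N·log(b_k − (2+ε)·log(k+2) − γ) − A, one has b_k ≥ b_0 + k for all k ≥ 0 (in particular b_k → ∞). -/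
/-!
If `b k ≥ b 0 + k`, the step `b (k+1) ≥ b k + 1` needs
`N log X ≥ (1 + ε/2) log (k+1) + A + 1` with `X = b k − (2+ε) log (k+2) − γ`, that is
`X ≥ exp (θ log (k+1) + (A+1)/N)` with `θ = (1 + ε/2)/N`. Since `θ < 1`, the right-hand side grows
like `(k+1)^θ`, and so does not outrun the linear growth of `b k`. This is made quantitative in
`growth_bound`: convexity of `exp` bounds the exponential by `θ (k+1)` plus a constant,
and a tangent line of slope `(1-θ)/(2+ε)` bounds the logarithm, so that the two slopes add up to
exactly `1`, the slope of `b 0 + k`. The remaining constants are absorbed in `B`. The induction then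
closes without further estimates.
-/

/-- A logarithm plus a power `x ^ θ` with `θ < 1` grows at most like `x` up to a constant. -/
lemma growth_bound (p γ θ c : ℝ) (hp : 0 < p) (hθ0 : 0 ≤ θ) (hθ1 : θ < 1) :
    ∃ B : ℝ, ∀ x : ℝ, 0 ≤ x →
      p * Real.log (x + 2) + γ + Real.exp (θ * Real.log (x + 1) + c) ≤ B + x := by
  have h1θ : 0 < 1 - θ := by linarith
  set δ : ℝ := (1 - θ) / p with hδ
  have hδ0 : 0 < δ := div_pos h1θ hp
  have hpδ : p * δ = 1 - θ := by rw [hδ]; field_simp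
  refine ⟨(1 - θ) * 2 + θ + p * (-1 - Real.log δ) + γ + (1 - θ) * Real.exp (c / (1 - θ)), ?_⟩
  intro x hx
  have hlog : Real.log (x + 2) ≤ δ * (x + 2) - 1 - Real.log δ := by
    have h := Real.log_le_sub_one_of_pos (mul_pos hδ0 (by linarith : 0 < x + 2))
    rw [Real.log_mul hδ0.ne' (by linarith)] at h
    linarith
  have hplog : p * Real.log (x + 2) ≤ (1 - θ) * (x + 2) + p * (-1 - Real.log δ) := by
    have h := mul_le_mul_of_nonneg_left hlog hp.le
    rw [← hpδ]
    linarith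
  have hexp : Real.exp (θ * Real.log (x + 1) + c)
      ≤ θ * (x + 1) + (1 - θ) * Real.exp (c / (1 - θ)) := by
    have h := convexOn_exp.2 (Set.mem_univ (Real.log (x + 1))) (Set.mem_univ (c / (1 - θ)))
      hθ0 h1θ.le (by ring)
    simp only [smul_eq_mul] at h
    rwa [Real.exp_log (by linarith), mul_div_cancel₀ c h1θ.ne'] at h
  linarith


/-- The key DeGiorgi iteration claim: for `0 < ε`, `1 + ε/2 < N ≤ 2` and `A, γ ∈ ℝ`,
there is `B` (depending only on `ε, N, A, γ`) so that any sequence `(b_k)` with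
`b_0 ≥ B` satisfying the recursive inequality
`b_{k+1} ≥ b_k − (1+ε/2)·log(k+1) + N·log(b_k − (2+ε)·log(k+2) − γ) − A`
whenever `b_k > (2+ε)·log(k+2) + γ`, satisfies `b_k ≥ b_0 + k` for all `k`. -/
theorem deGiorgi_iteration (ε N A γ : ℝ) (hε : 0 < ε) (hN1 : 1 + ε / 2 < N)
    (hN2 : N ≤ 2) :
    ∃ B : ℝ, ∀ b : ℕ → ℝ, B ≤ b 0 →
      (∀ k : ℕ, (2 + ε) * Real.log ((k : ℝ) + 2) + γ < b k →
        b k - (1 + ε / 2) * Real.log ((k : ℝ) + 1)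
          + N * Real.log (b k - (2 + ε) * Real.log ((k : ℝ) + 2) - γ) - A ≤ b (k + 1)) →
      ∀ k : ℕ, b 0 + (k : ℝ) ≤ b k := by
  have hN : 0 < N := by linarith
  have hθ1 : (1 + ε / 2) / N < 1 := (div_lt_one hN).2 hN1
  obtain ⟨B, hB⟩ := growth_bound (2 + ε) γ ((1 + ε / 2) / N) ((A + 1) / N)
    (by linarith) (by positivity) hθ1
  refine ⟨B, fun b hb0 hrec k => ?_⟩
  induction k with
  | zero => simp
  | succ k ih =>
    have hk := hB k k.cast_nonneg
    have hpos := Real.exp_pos ((1 + ε / 2) / N * Real.log ((k : ℝ) + 1) + (A + 1) / N)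
    have hstep := hrec k (by linarith)
    have hlog : (1 + ε / 2) / N * Real.log ((k : ℝ) + 1) + (A + 1) / N
        ≤ Real.log (b k - (2 + ε) * Real.log ((k : ℝ) + 2) - γ) :=
      (Real.le_log_iff_exp_le (by linarith)).2 (by linarith)
    have hNlog := mul_le_mul_of_nonneg_left hlog hN.le
    have hcancel : N * ((1 + ε / 2) / N * Real.log ((k : ℝ) + 1) + (A + 1) / N)
        = (1 + ε / 2) * Real.log ((k : ℝ) + 1) + (A + 1) := by
      field_simp
    push_cast
    linarith
end

section
/- Let h : ℝ → ℝ be a nondecreasing function with h(t) → +∞ as t → +∞, and let c₀, c₁ ∈ ℝ. Then there exists a real number B (depending only on h, c₀, c₁) with the following property: for every sequence (b_k)_{k≥0} of real numbers such that b_0 ≥ B and such that b_{k+1} ≥ b_k − c₀ + h(b_k − 3·log(k+2) − c₁) for every k ≥ 0, one has b_k ≥ b_0 + k for all k ≥ 0 (in particular b_k → ∞). -/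
/-!
The linear growth `b_k ≥ b_0 + k` reproduces itself because it beats the logarithmic loss:
`k - 3 log (k + 2)` is bounded below (`three_mul_log_add_two_le`). So once `b_0` is large, the
argument of `h` stays, for every `k`, in the region where `h ≥ c₀ + 1`, and each step then
gains at least `1`.
-/

/-- The tangent-line bound for `log` at `3`, the point where `3 log` has slope `1`. -/
lemma three_mul_log_add_two_le (k : ℕ) :
    3 * Real.log ((k : ℝ) + 2) ≤ (k : ℝ) - 1 + 3 * Real.log 3 := by
  have hpos : (0 : ℝ) < (k : ℝ) + 2 := by positivity
  have h1 := Real.log_le_sub_one_of_pos (div_pos hpos (by norm_num : (0 : ℝ) < 3))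
  rw [Real.log_div hpos.ne' (by norm_num)] at h1
  linarith

/-- Iteration claim underlying the abstract maximum principle: if `h` is nondecreasing
with `h(t) → ∞` as `t → ∞`, and `c₀, c₁ ∈ ℝ`, then there is `B` (depending only on
`h, c₀, c₁`) so that any sequence `(b_k)` with `b_0 ≥ B` satisfying
`b_{k+1} ≥ b_k − c₀ + h(b_k − 3·log(k+2) − c₁)` for all `k` satisfies
`b_k ≥ b_0 + k` for all `k`. -/
theorem maxPrinciple_iteration (h : ℝ → ℝ) (hmono : Monotone h)
    (hlim : Filter.Tendsto h Filter.atTop Filter.atTop) (c₀ c₁ : ℝ) :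
    ∃ B : ℝ, ∀ b : ℕ → ℝ, B ≤ b 0 →
      (∀ k : ℕ, b k - c₀ + h (b k - 3 * Real.log ((k : ℝ) + 2) - c₁) ≤ b (k + 1)) →
      ∀ k : ℕ, b 0 + (k : ℝ) ≤ b k := by
  obtain ⟨T, hT⟩ := Filter.eventually_atTop.1 (hlim.eventually_ge_atTop (c₀ + 1))
  refine ⟨T + c₁ + 3 * Real.log 3, fun b hB hb k => ?_⟩
  induction k with
  | zero => simp
  | succ k ih =>
    have hlog := three_mul_log_add_two_le k
    have hgain := hT (b k - 3 * Real.log ((k : ℝ) + 2) - c₁) (by linarith)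
    have hstep := hb k
    push_cast
    linarith
end

section
/- Let (X, μ) be a measure space, let Ω₁ and Ω₂ be disjoint measurable subsets of X with 0 < μ(Ω₁) < ∞ and 0 < μ(Ω₂) < ∞, and suppose μ(Ω₁) ≤ C₁·μ(Ω₂) and μ(Ω₂) ≤ C₁·μ(Ω₁) for some constant C₁ ≥ 1. Set Ω = Ω₁ ∪ Ω₂. Then for every measurable function w : X → ℝ one has ∫∫_{Ω×Ω} |w(x) − w(y)| dμ(x)dμ(y) ≤ (2 + 4C₁) · ∫∫_{Ω₁×Ω₂} |w(x) − w(y)| dμ(x)dμ(y) (as an inequality of possibly infinite double integrals with respect to the product measure μ × μ). -/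
/-! Write `f x y = |w x - w y|` and `I i j` for the iterated integral of `f` over `Ωᵢ × Ωⱼ`. The
integral over `Ω × Ω` is `I 1 1 + I 1 2 + I 2 1 + I 2 2`, and `I 2 1 = I 1 2` by symmetry.
For the diagonal terms, integrate the triangle inequality `f x y ≤ f x z + f y z` over
`x, y ∈ Ω₁` and `z ∈ Ω₂`: this gives `μ Ω₂ * I 1 1 ≤ 2 * μ Ω₁ * I 1 2 ≤ 2 * C₁ * μ Ω₂ * I 1 2`, so
`I 1 1 ≤ 2 * C₁ * I 1 2` (`lintegral_self_le`), and likewise for `I 2 2`.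

Since `μ` need not be s-finite, the Tonelli theorem for `μ.prod μ` is not available directly.
Mathlib defines `μ.prod μ` as `μ.bind fun x => μ.map (Prod.mk x)`. If that family of measures is
not a.e. measurable, then `μ.prod μ = 0` and the inequality is trivial. Otherwise integrals over
rectangles are iterated integrals (`setLIntegral_prod_of_aemeasurable`), and everything reduces to
the finite measures `μ.restrict Ω₁` and `μ.restrict Ω₂`. -/

open MeasureTheory

/-- Integrals over rectangles are iterated integrals, with no s-finiteness assumption, as soon as
the family of measures defining `μ.prod μ` is a.e. measurable. -/
lemma setLIntegral_prod_of_aemeasurable {X : Type*} [MeasurableSpace X] (μ : Measure X)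
    (h : AEMeasurable (fun x : X => μ.map (Prod.mk x)) μ)
    {A B : Set X} (hA : MeasurableSet A) (hB : MeasurableSet B)
    {g : X × X → ENNReal} (hg : Measurable g) :
    ∫⁻ p in A ×ˢ B, g p ∂(μ.prod μ) = ∫⁻ x in A, ∫⁻ y in B, g (x, y) ∂μ ∂μ := by
  have hgi : Measurable ((A ×ˢ B).indicator g) := hg.indicator (hA.prod hB)
  rw [← lintegral_indicator (hA.prod hB), Measure.prod,
    Measure.lintegral_bind h hgi.aemeasurable, ← lintegral_indicator hA]
  refine lintegral_congr fun x => ?_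
  rw [lintegral_map hgi measurable_prodMk_left]
  by_cases hx : x ∈ A
  · rw [Set.indicator_of_mem hx, ← lintegral_indicator hB]
    refine lintegral_congr fun y => ?_
    by_cases hy : y ∈ B <;> simp [Set.indicator, hx, hy]
  · simp [Set.indicator, hx]

/-- The diagonal estimate: averaging `|w x - w y| ≤ |w x - w z| + |w y - w z|` over `z` with
respect to `b` bounds the integral against `a ⊗ a` by the one against `a ⊗ b`. -/
lemma lintegral_self_le {X : Type*} [MeasurableSpace X] (a b : Measure X)
    [IsFiniteMeasure a] [IsFiniteMeasure b] (hb : b Set.univ ≠ 0) (C : ENNReal)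
    (hab : a Set.univ ≤ C * b Set.univ) (w : X → ℝ) (hw : Measurable w) :
    ∫⁻ x, ∫⁻ y, ENNReal.ofReal |w x - w y| ∂a ∂a ≤
      2 * C * ∫⁻ x, ∫⁻ y, ENNReal.ofReal |w x - w y| ∂b ∂a := by
  set F : X → ENNReal := fun x => ∫⁻ z, ENNReal.ofReal |w x - w z| ∂b with hF
  have hf : Measurable fun p : X × X => ENNReal.ofReal |w p.1 - w p.2| := by fun_prop
  have hFm : Measurable F := hf.lintegral_prod_right'
  have htri : ∀ x y, b Set.univ * ENNReal.ofReal |w x - w y| ≤ F x + F y := by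
    intro x y
    rw [mul_comm, ← lintegral_const, hF, ← lintegral_add_left (by fun_prop)]
    refine lintegral_mono fun z => ?_
    rw [← ENNReal.ofReal_add (abs_nonneg _) (abs_nonneg _)]
    refine ENNReal.ofReal_le_ofReal ?_
    rw [abs_sub_comm (w y)]
    exact abs_sub_le _ _ _
  have hmul : b Set.univ * ∫⁻ x, ∫⁻ y, ENNReal.ofReal |w x - w y| ∂a ∂a ≤
      b Set.univ * (2 * C * ∫⁻ x, F x ∂a) := by
    calc b Set.univ * ∫⁻ x, ∫⁻ y, ENNReal.ofReal |w x - w y| ∂a ∂a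
        = ∫⁻ x, ∫⁻ y, b Set.univ * ENNReal.ofReal |w x - w y| ∂a ∂a := by
          rw [← lintegral_const_mul _ hf.lintegral_prod_right']
          refine lintegral_congr fun x => ?_
          rw [lintegral_const_mul _ (by fun_prop)]
      _ ≤ ∫⁻ x, ∫⁻ y, (F x + F y) ∂a ∂a :=
          lintegral_mono fun x => lintegral_mono fun y => htri x y
      _ = 2 * a Set.univ * ∫⁻ x, F x ∂a := by
          simp_rw [lintegral_add_left measurable_const, lintegral_const]
          rw [lintegral_add_right _ measurable_const, lintegral_mul_const _ hFm, lintegral_const]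
          ring
      _ ≤ 2 * (C * b Set.univ) * ∫⁻ x, F x ∂a := by gcongr
      _ = b Set.univ * (2 * C * ∫⁻ x, F x ∂a) := by ring
  exact (ENNReal.mul_le_mul_iff_right hb (measure_ne_top b _)).1 hmul

/-- Division-of-regions lemma: if `Ω₁, Ω₂` are disjoint measurable sets of positive
finite measure, comparable up to a factor `C₁ ≥ 1`, then with `Ω = Ω₁ ∪ Ω₂`, for every
measurable `w : X → ℝ`,
`∫∫_{Ω×Ω} |w(x) − w(y)| ≤ (2 + 4C₁) ∫∫_{Ω₁×Ω₂} |w(x) − w(y)|`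
with respect to the product measure `μ × μ`, in `[0,∞]`. -/
theorem division_of_regions {X : Type*} [MeasurableSpace X] (μ : Measure X)
    (Ω₁ Ω₂ : Set X) (hm1 : MeasurableSet Ω₁) (hm2 : MeasurableSet Ω₂)
    (hdisj : Disjoint Ω₁ Ω₂)
    (h1pos : 0 < μ Ω₁) (h1fin : μ Ω₁ < ⊤) (h2pos : 0 < μ Ω₂) (h2fin : μ Ω₂ < ⊤)
    (C₁ : ℝ) (hC : 1 ≤ C₁)
    (h12 : μ Ω₁ ≤ ENNReal.ofReal C₁ * μ Ω₂) (h21 : μ Ω₂ ≤ ENNReal.ofReal C₁ * μ Ω₁)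
    (w : X → ℝ) (hw : Measurable w) :
    ∫⁻ p in (Ω₁ ∪ Ω₂) ×ˢ (Ω₁ ∪ Ω₂), ENNReal.ofReal |w p.1 - w p.2| ∂(μ.prod μ) ≤
      ENNReal.ofReal (2 + 4 * C₁) *
        ∫⁻ p in Ω₁ ×ˢ Ω₂, ENNReal.ofReal |w p.1 - w p.2| ∂(μ.prod μ) := by
  by_cases h : AEMeasurable (fun x : X => μ.map (Prod.mk x)) μ
  swap
  · -- `Measure.bind` takes the junk value `0` here.
    have h0 : μ.prod μ = 0 := by
      rw [Measure.prod, Measure.bind, Measure.map_of_not_aemeasurable h, Measure.join_zero]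
    simp [h0]
  have hf : Measurable fun p : X × X => ENNReal.ofReal |w p.1 - w p.2| := by fun_prop
  rw [setLIntegral_prod_of_aemeasurable μ h (hm1.union hm2) (hm1.union hm2) hf,
    setLIntegral_prod_of_aemeasurable μ h hm1 hm2 hf, Measure.restrict_union hdisj hm2]
  have : IsFiniteMeasure (μ.restrict Ω₁) := ⟨by simpa using h1fin⟩
  have : IsFiniteMeasure (μ.restrict Ω₂) := ⟨by simpa using h2fin⟩
  have d1 := lintegral_self_le (μ.restrict Ω₁) (μ.restrict Ω₂) (by simpa using h2pos.ne')
    (ENNReal.ofReal C₁) (by simpa using h12) w hw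
  have d2 := lintegral_self_le (μ.restrict Ω₂) (μ.restrict Ω₁) (by simpa using h1pos.ne')
    (ENNReal.ofReal C₁) (by simpa using h21) w hw
  have hsymm : ∫⁻ x in Ω₂, ∫⁻ y in Ω₁, ENNReal.ofReal |w x - w y| ∂μ ∂μ =
      ∫⁻ x in Ω₁, ∫⁻ y in Ω₂, ENNReal.ofReal |w x - w y| ∂μ ∂μ := by
    rw [lintegral_lintegral_swap hf.aemeasurable]
    simp_rw [abs_sub_comm]
  rw [hsymm] at d2
  have hconst : ENNReal.ofReal (2 + 4 * C₁) = 2 + 4 * ENNReal.ofReal C₁ := by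
    rw [ENNReal.ofReal_add (by norm_num) (by linarith), ENNReal.ofReal_mul (by norm_num)]
    norm_num
  simp_rw [lintegral_add_measure]
  rw [lintegral_add_left hf.lintegral_prod_right', lintegral_add_left hf.lintegral_prod_right',
    hsymm, hconst]
  set I := ∫⁻ x in Ω₁, ∫⁻ y in Ω₂, ENNReal.ofReal |w x - w y| ∂μ ∂μ
  calc _ ≤ (2 * ENNReal.ofReal C₁ * I + I) + (I + 2 * ENNReal.ofReal C₁ * I) := by gcongr
    _ = (2 + 4 * ENNReal.ofReal C₁) * I := by ring
end

section
/- Let R > 0, C ≥ 1, ε ∈ (0,1), and let F : (0,R) → ℝ be differentiable and satisfy: F'(x) < 0 and −x·F'(x) ≥ ε for all x ∈ (0,R), and the doubling property (1/C)·(−F'(r)) ≤ −F'(x) ≤ C·(−F'(r)) whenever 0 < r/2 < x < 2r < R. Then there exists a constant K ≥ 1, depending only on C and ε, such that for all x₁, x₂ with 0 < x₁ < R, max{ε·x₁, x₁ − 1/(−F'(x₁))} ≤ x₂ ≤ x₁ + 1/(−F'(x₁)), and x₂ < R/2, one has (1/K)·(−F'(x₁)) ≤ −F'(x₂) ≤ K·(−F'(x₁))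 and, with f = exp(−F), (1/K)·f(x₁) ≤ f(x₂) ≤ K·f(x₁). -/
/-!
Write `G = -F'`. Any two points `a ≤ b < 4a` of `(0, R)` lie in a common doubling interval
`(r/2, 2r)` with `2r < R`: any `r` with `b/2 < r < min (R/2) (2a)` works, even when `a` or `b`
exceeds `R/2`. Hence `G a` and `G b` agree up to `C ^ 2`, and iterating, up to `(C ^ 2) ^ n` when
`b ≤ 2 ^ n * a` (`doubling_chain`).

The condition `ε ≤ x₁ * G x₁` gives `1 / G x₁ ≤ x₁ / ε`, so every `t` between `x₁` and `x₂`
satisfies `ε x₁ ≤ t ≤ (1 + 1/ε) x₁`, and `G t` is comparable to `G x₁` with a factor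
`M = (C ^ 2) ^ n`, where `2 ^ n ≥ 1 + 1/ε`. Since `|x₂ - x₁| ≤ 1 / G x₁`, the mean value inequality
gives `|F x₂ - F x₁| ≤ M`, and `K = exp M ≥ M` serves for both comparisons.
-/

/-- Two points of `(0, R)` within a factor `4` of each other see a common doubling centre. -/
theorem doubling_step {C R : ℝ} {G : ℝ → ℝ} (hC : 1 ≤ C)
    (hd : ∀ r x : ℝ, 0 < r / 2 → r / 2 < x → x < 2 * r → 2 * r < R →
      (1 / C) * G r ≤ G x ∧ G x ≤ C * G r)
    {a b : ℝ} (ha : 0 < a) (hab : a ≤ b) (hbR : b < R) (hb : b < 4 * a) :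
    G a ≤ C ^ 2 * G b ∧ G b ≤ C ^ 2 * G a := by
  obtain ⟨r, hr1, hr2⟩ : ∃ r, b / 2 < r ∧ r < min (R / 2) (2 * a) :=
    exists_between (lt_min (by linarith) (by linarith))
  have hrR := hr2.trans_le (min_le_left _ _)
  have hra := hr2.trans_le (min_le_right _ _)
  have hC0 : 0 < C := by linarith
  obtain ⟨a1, a2⟩ := hd r a (by linarith) (by linarith) (by linarith) (by linarith)
  obtain ⟨b1, b2⟩ := hd r b (by linarith) (by linarith) (by linarith) (by linarith)
  rw [one_div, inv_mul_le_iff₀ hC0] at a1 b1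
  constructor
  · nlinarith [mul_le_mul_of_nonneg_left b1 hC0.le]
  · nlinarith [mul_le_mul_of_nonneg_left a1 hC0.le]

theorem doubling_chain {C R : ℝ} {G : ℝ → ℝ} (hC : 1 ≤ C)
    (hd : ∀ r x : ℝ, 0 < r / 2 → r / 2 < x → x < 2 * r → 2 * r < R →
      (1 / C) * G r ≤ G x ∧ G x ≤ C * G r) (n : ℕ) :
    ∀ a b : ℝ, 0 < a → a ≤ b → b < R → b ≤ 2 ^ n * a →
      G a ≤ (C ^ 2) ^ n * G b ∧ G b ≤ (C ^ 2) ^ n * G a := by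
  induction n with
  | zero =>
    intro a b ha hab hbR hb
    obtain rfl : a = b := le_antisymm hab (by simpa using hb)
    simp
  | succ n ih =>
    intro a b ha hab hbR hb
    -- Halve `b`, but stop at `a`.
    have hc1 : a ≤ max a (b / 2) := le_max_left _ _
    have hc2 : b / 2 ≤ max a (b / 2) := le_max_right _ _
    have hcb : max a (b / 2) ≤ b := max_le hab (by linarith)
    have hcn : max a (b / 2) ≤ 2 ^ n * a := by
      refine max_le (le_mul_of_one_le_left ha.le (one_le_pow₀ (by norm_num))) ?_
      rw [pow_succ] at hb
      linarith
    generalize max a (b / 2) = c at *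
    obtain ⟨p1, p2⟩ := ih a c ha hc1 (by linarith) hcn
    obtain ⟨q1, q2⟩ := doubling_step hC hd (show 0 < c by linarith) hcb hbR (by linarith)
    have hM : (0 : ℝ) ≤ (C ^ 2) ^ n := by positivity
    constructor
    · calc G a ≤ (C ^ 2) ^ n * G c := p1
        _ ≤ (C ^ 2) ^ n * (C ^ 2 * G b) := by gcongr
        _ = _ := by ring
    · calc G b ≤ C ^ 2 * G c := q2
        _ ≤ C ^ 2 * ((C ^ 2) ^ n * G a) := by gcongr
        _ = _ := by ring

/-- Comparability of `|F'|` and `f = exp(−F)` at nearby points: under the structure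
conditions (`F' < 0`, `−x·F'(x) ≥ ε`, doubling of `|F'|`), there is a constant `K ≥ 1`
depending only on `C` and `ε` such that whenever
`max{ε·x₁, x₁ − 1/|F'(x₁)|} ≤ x₂ ≤ x₁ + 1/|F'(x₁)|` (with `x₂ < R/2`),
one has `|F'(x₁)| ≈ |F'(x₂)|` and `f(x₁) ≈ f(x₂)` up to the factor `K`. -/
theorem comparability_nearby (C ε : ℝ) (hC : 1 ≤ C) (hε : ε ∈ Set.Ioo (0 : ℝ) 1) :
    ∃ K : ℝ, 1 ≤ K ∧
      ∀ (R : ℝ) (F F' : ℝ → ℝ), 0 < R →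
        (∀ x ∈ Set.Ioo (0 : ℝ) R, HasDerivAt F (F' x) x) →
        (∀ x ∈ Set.Ioo (0 : ℝ) R, F' x < 0) →
        (∀ x ∈ Set.Ioo (0 : ℝ) R, ε ≤ -x * F' x) →
        (∀ r x : ℝ, 0 < r / 2 → r / 2 < x → x < 2 * r → 2 * r < R →
          (1 / C) * (-F' r) ≤ -F' x ∧ -F' x ≤ C * (-F' r)) →
        ∀ x₁ x₂ : ℝ, 0 < x₁ → x₁ < R →
          max (ε * x₁) (x₁ - 1 / (-F' x₁)) ≤ x₂ →
          x₂ ≤ x₁ + 1 / (-F' x₁) → x₂ < R / 2 →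
          (1 / K) * (-F' x₁) ≤ -F' x₂ ∧ -F' x₂ ≤ K * (-F' x₁) ∧
          (1 / K) * Real.exp (-F x₁) ≤ Real.exp (-F x₂) ∧
          Real.exp (-F x₂) ≤ K * Real.exp (-F x₁) := by
  obtain ⟨hε0, hε1⟩ := hε
  obtain ⟨n, hn⟩ := pow_unbounded_of_one_lt (1 + 1 / ε) (one_lt_two : (1 : ℝ) < 2)
  have hM1 : 1 ≤ (C ^ 2) ^ n := one_le_pow₀ (one_le_pow₀ hC)
  have hMK : (C ^ 2) ^ n ≤ Real.exp ((C ^ 2) ^ n) := by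
    linarith [Real.add_one_le_exp ((C ^ 2) ^ n)]
  refine ⟨Real.exp ((C ^ 2) ^ n), hM1.trans hMK, ?_⟩
  intro R F F' hR hF hneg hlow hd x₁ x₂ hx₁ hx₁R hlo hhi hx₂R
  have hchain := doubling_chain (G := fun x => -F' x) hC hd n
  generalize (C ^ 2) ^ n = M at *
  obtain ⟨hlo1, hlo2⟩ := max_le_iff.1 hlo
  have hG : 0 < -F' x₁ := neg_pos.2 (hneg x₁ ⟨hx₁, hx₁R⟩)
  have hinv : 1 / (-F' x₁) ≤ x₁ * (1 / ε) := by
    rw [mul_one_div, div_le_div_iff₀ hG hε0]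
    linarith [hlow x₁ ⟨hx₁, hx₁R⟩]
  have hεx : 0 < ε * x₁ := mul_pos hε0 hx₁
  have hseg : ∀ t ∈ Set.uIcc x₁ x₂, t ∈ Set.Ioo 0 R ∧
      -F' x₁ ≤ M * -F' t ∧ -F' t ≤ M * -F' x₁ := by
    intro t ht
    have ht1 : ε * x₁ ≤ t := (le_min (by nlinarith) hlo1).trans ht.1
    have ht2 : t ≤ (1 + 1 / ε) * x₁ :=
      ht.2.trans (max_le (by nlinarith [one_div_pos.2 hε0]) (by linarith))
    have htR : t < R := ht.2.trans_lt (max_lt hx₁R (by linarith))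
    have ht0 : 0 < t := hεx.trans_le ht1
    refine ⟨⟨ht0, htR⟩, ?_⟩
    rcases le_total x₁ t with h | h
    · exact hchain x₁ t hx₁ h htR (ht2.trans (by gcongr))
    · refine (hchain t x₁ ht0 h hx₁R ?_).symm
      have h1 : x₁ ≤ (1 / ε) * t := by
        rw [one_div, le_inv_mul_iff₀ hε0]
        exact ht1
      have h2 : (1 / ε) * t ≤ 2 ^ n * t := by
        gcongr
        linarith
      exact h1.trans h2
  have hmv : ‖F x₂ - F x₁‖ ≤ (M * -F' x₁) * ‖x₂ - x₁‖ :=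
    Convex.norm_image_sub_le_of_norm_hasDerivWithin_le (s := Set.uIcc x₁ x₂)
      (fun t ht => (hF t (hseg t ht).1).hasDerivWithinAt)
      (fun t ht => by
        rw [Real.norm_eq_abs, abs_of_neg (hneg t (hseg t ht).1)]
        exact (hseg t ht).2.2)
      (convex_uIcc x₁ x₂) Set.left_mem_uIcc Set.right_mem_uIcc
  have hdist : ‖x₂ - x₁‖ ≤ 1 / (-F' x₁) := by
    rw [Real.norm_eq_abs, abs_le]
    constructor <;> linarith
  have hFM : |F x₂ - F x₁| ≤ M := by
    calc |F x₂ - F x₁| ≤ (M * -F' x₁) * ‖x₂ - x₁‖ := hmv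
      _ ≤ (M * -F' x₁) * (1 / (-F' x₁)) := by gcongr
      _ = M := by rw [mul_assoc, mul_one_div_cancel hG.ne', mul_one]
  obtain ⟨hF1, hF2⟩ := abs_le.1 hFM
  obtain ⟨hx₂, hc1, hc2⟩ := hseg x₂ Set.right_mem_uIcc
  have hG2 : 0 < -F' x₂ := neg_pos.2 (hneg x₂ hx₂)
  refine ⟨?_, ?_, ?_, ?_⟩
  · rw [one_div, inv_mul_le_iff₀ (Real.exp_pos M)]
    exact hc1.trans (by gcongr)
  · exact hc2.trans (by gcongr)
  · rw [one_div, inv_mul_le_iff₀ (Real.exp_pos M), ← Real.exp_add, Real.exp_le_exp]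
    linarith
  · rw [← Real.exp_add, Real.exp_le_exp]
    linarith
end

section
/- Let R > 0 and let F : (0,R) → ℝ be differentiable with F'(x) < 0 for all x ∈ (0,R), with x ↦ 1/(−F'(x)) nondecreasing on (0,R), and with lim_{x→0⁺} F(x) = +∞. Set f = exp(−F). Then for every x ∈ (0,R) and every λ > f(x): ∫₀^x f(u)²/√(λ² − f(u)²) du ≤ f(x)² / (λ·(−F'(x))). -/
/-! Write `f = exp(−F)` and `c = 1/(−F'(x))`. Since `f' = (−F') f`, the function
`G(u) = −√(λ² − f(u)²)` has derivative `(−F'(u)) · f(u)²/√(λ² − f(u)²)`. By monotonicity of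
`1/(−F')` we have `1 ≤ c · (−F'(u))` for `u ≤ x`, so the integrand is at most `c · G'(u)`.
As `f(u) → 0` when `u → 0⁺`, `G` extends continuously to `0` by `−λ`, and integrating gives
the bound `c (λ − √(λ² − f(x)²)) = c f(x)² / (λ + √(λ² − f(x)²)) ≤ c f(x)² / λ`.
-/

/-- Upper bound for the height of a point on the geodesic `γ_{0,λ}`: with `f = exp(−F)`,
for `x ∈ (0,R)` and `λ > f(x)`,
`∫₀^x f(u)²/√(λ² − f(u)²) du ≤ f(x)²/(λ·(−F'(x)))`. -/
theorem geodesic_height_upper_bound (R : ℝ) (hR : 0 < R) (F F' : ℝ → ℝ)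
    (hderiv : ∀ x ∈ Set.Ioo (0 : ℝ) R, HasDerivAt F (F' x) x)
    (hneg : ∀ x ∈ Set.Ioo (0 : ℝ) R, F' x < 0)
    (hmono : ∀ x ∈ Set.Ioo (0 : ℝ) R, ∀ y ∈ Set.Ioo (0 : ℝ) R, x ≤ y →
      1 / (-F' x) ≤ 1 / (-F' y))
    (hlim : Filter.Tendsto F (nhdsWithin 0 (Set.Ioi 0)) Filter.atTop)
    (x : ℝ) (hx : x ∈ Set.Ioo (0 : ℝ) R) (lam : ℝ) (hlam : Real.exp (-F x) < lam) :
    ∫ u in (0 : ℝ)..x,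
        Real.exp (-F u) ^ 2 / Real.sqrt (lam ^ 2 - Real.exp (-F u) ^ 2) ≤
      Real.exp (-F x) ^ 2 / (lam * (-F' x)) := by
  have hlam0 : 0 < lam := (Real.exp_pos _).trans hlam
  have hFx : 0 < -F' x := neg_pos.2 (hneg x hx)
  have hanti : AntitoneOn F (Set.Ioo 0 R) := by
    refine antitoneOn_of_deriv_nonpos (convex_Ioo 0 R)
      (fun u hu => (hderiv u hu).continuousAt.continuousWithinAt) ?_ ?_ <;>
      rw [interior_Ioo]
    · exact fun u hu => (hderiv u hu).differentiableAt.differentiableWithinAt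
    · exact fun u hu => (hderiv u hu).deriv ▸ (hneg u hu).le
  have hmem : ∀ u, 0 < u → u ≤ x → u ∈ Set.Ioo 0 R := fun u h0 h1 => ⟨h0, h1.trans_lt hx.2⟩
  have hpos : ∀ u, 0 < u → u ≤ x → 0 < lam ^ 2 - Real.exp (-F u) ^ 2 := by
    intro u h0 h1
    have h2 : Real.exp (-F u) ≤ Real.exp (-F x) :=
      Real.exp_le_exp.2 (neg_le_neg (hanti (hmem u h0 h1) hx h1))
    have h3 := Real.exp_pos (-F u)
    nlinarith
  -- A non-integrable integrand has integral `0` by convention, and the bound is nonnegative.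
  by_cases hint : IntervalIntegrable
      (fun u => Real.exp (-F u) ^ 2 / Real.sqrt (lam ^ 2 - Real.exp (-F u) ^ 2))
      MeasureTheory.volume 0 x
  swap
  · rw [intervalIntegral.integral_undef hint]
    positivity
  set G : ℝ → ℝ := fun u => -Real.sqrt (lam ^ 2 - Real.exp (-F u) ^ 2) with hG
  have hGd : ∀ u, 0 < u → u ≤ x → HasDerivAt (Function.update G 0 (-lam))
      ((-F' u) * (Real.exp (-F u) ^ 2 / Real.sqrt (lam ^ 2 - Real.exp (-F u) ^ 2))) u := by
    intro u h0 h1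
    have hp := hpos u h0 h1
    have hs := Real.sqrt_pos.2 hp
    have h := (((((hderiv u (hmem u h0 h1)).neg.exp).pow 2).const_sub (lam ^ 2)).sqrt hp.ne').neg
    have h' : HasDerivAt G
        ((-F' u) * (Real.exp (-F u) ^ 2 / Real.sqrt (lam ^ 2 - Real.exp (-F u) ^ 2))) u := by
      refine h.congr_deriv ?_
      simp only [Pi.neg_apply, Pi.pow_apply]
      push_cast
      field_simp
    refine h'.congr_of_eventuallyEq ?_
    filter_upwards [lt_mem_nhds h0] with v hv
    exact Function.update_of_ne hv.ne' _ _
  have hG0 : Filter.Tendsto G (nhdsWithin 0 (Set.Ioi 0)) (nhds (-lam)) := by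
    have h1 : Filter.Tendsto (fun u => Real.exp (-F u)) (nhdsWithin 0 (Set.Ioi 0)) (nhds 0) :=
      Real.tendsto_exp_neg_atTop_nhds_zero.comp hlim
    have h2 := (((h1.pow 2).const_sub (lam ^ 2)).sqrt).neg
    simpa [hG, Real.sqrt_sq hlam0.le] using h2
  have hcont : ContinuousOn (Function.update G 0 (-lam)) (Set.Icc 0 x) := by
    intro u hu
    rcases hu.1.eq_or_lt with rfl | h0
    · rw [continuousWithinAt_update_same]
      refine hG0.mono_left (nhdsWithin_mono _ ?_)
      rintro v ⟨hv, hv0⟩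
      exact lt_of_le_of_ne hv.1 (Ne.symm hv0)
    · exact (hGd u h0 hu.2).continuousAt.continuousWithinAt
  have key := intervalIntegral.integral_le_sub_of_hasDeriv_right_of_le hx.1.le
    (hcont.const_smul (1 / (-F' x)))
    (fun u hu => ((hGd u hu.1 hu.2.le).const_smul (1 / (-F' x))).hasDerivWithinAt)
    ((intervalIntegrable_iff_integrableOn_Icc_of_le hx.1.le).1 hint)
    (by
      intro u hu
      have hu' := hmem u hu.1 hu.2.le
      have hFu : 0 < -F' u := neg_pos.2 (hneg u hu')
      have h1 : 1 ≤ 1 / (-F' x) * (-F' u) := by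
        have := mul_le_mul_of_nonneg_right (hmono u hu' x hx hu.2.le) hFu.le
        rwa [one_div_mul_cancel hFu.ne'] at this
      rw [smul_eq_mul, ← mul_assoc]
      exact le_mul_of_one_le_left (by positivity) h1)
  refine key.trans ?_
  have hp := hpos x hx.1 le_rfl
  have hs := Real.sqrt_nonneg (lam ^ 2 - Real.exp (-F x) ^ 2)
  have hsq := Real.sq_sqrt hp.le
  simp only [Pi.smul_apply, smul_eq_mul, Function.update_self, Function.update_of_ne hx.1.ne', hG]
  set s := Real.sqrt (lam ^ 2 - Real.exp (-F x) ^ 2)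
  have hsl : s ≤ lam := by nlinarith [sq_nonneg (Real.exp (-F x))]
  -- Since `f(x)² = λ² − s²`, the claim is `λ (λ − s) ≤ λ² − s²`, that is, `s² ≤ λ s`.
  have h1 : lam - s ≤ Real.exp (-F x) ^ 2 / lam := by
    rw [le_div_iff₀ hlam0]
    nlinarith
  calc 1 / (-F' x) * -s - 1 / (-F' x) * -lam = 1 / (-F' x) * (lam - s) := by ring
    _ ≤ 1 / (-F' x) * (Real.exp (-F x) ^ 2 / lam) := by gcongr
    _ = _ := by rw [div_mul_div_comm, one_mul, mul_comm lam]
end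

section
/- Let R > 0, ε ∈ (0,1], and let F : (0,R) → ℝ be differentiable with F'(x) < 0 and −x·F'(x) ≥ ε for all x ∈ (0,R), with x ↦ 1/(−F'(x)) nondecreasing on (0,R), and with lim_{x→0⁺} F(x) = +∞. Set f = exp(−F). Then for every x₁ ∈ (0,R) and every λ > f(x₁): x₁ ≤ ∫₀^{x₁} λ/√(λ² − f(u)²) du ≤ x₁ + 1/(−F'(x₁)) ≤ (1 + 1/ε)·x₁. In particular, the control-metric arc length of the geodesic γ_{0,λ} from the origin to the point with horizontal coordinate x₁ is comparable to x₁. -/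
/-!
Put `f = exp(-F)`, extended by `f(0) = 0`, and `c(u) = √(λ² - f(u)²)`. Since `f` increases to
`f(x₁) < λ`, we have `0 < c ≤ λ`, so the integrand `λ/c` is continuous and at least `1`; this gives
the lower bound.

For the upper bound put `M = 1/(-F'(x₁))`. Monotonicity of `1/(-F')` gives `f ≤ M f'` on `(0, x₁)`.
Together with `λ(λ - c) ≤ λ² - c² = f²` this yields
`λ/c ≤ 1 + f²/(λ c) ≤ 1 + (M/λ) f f'/c = (u - (M/λ) c(u))'`, and integrating bounds the arc length
by `x₁ + (M/λ)(c(0) - c(x₁)) ≤ x₁ + M` (`arclength_bounds`). The last inequality is `M ≤ x₁/ε`.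
-/

/-- Two-sided bound for the arc length integral of a profile `f` satisfying the differential
inequality `f ≤ M f'` on the open interval. -/
lemma arclength_bounds {f f' : ℝ → ℝ} {a lam M : ℝ} (ha : 0 ≤ a) (hM : 0 ≤ M)
    (hc : ContinuousOn f (Set.Icc 0 a))
    (h0 : ∀ u ∈ Set.Icc 0 a, 0 ≤ f u) (h1 : ∀ u ∈ Set.Icc 0 a, f u < lam)
    (hd : ∀ u ∈ Set.Ioo 0 a, HasDerivAt f (f' u) u)
    (hM' : ∀ u ∈ Set.Ioo 0 a, f u ≤ M * f' u) :
    a ≤ (∫ u in (0 : ℝ)..a, lam / Real.sqrt (lam ^ 2 - f u ^ 2)) ∧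
    (∫ u in (0 : ℝ)..a, lam / Real.sqrt (lam ^ 2 - f u ^ 2)) ≤ a + M := by
  have hl : 0 < lam := (h0 0 ⟨le_rfl, ha⟩).trans_lt (h1 0 ⟨le_rfl, ha⟩)
  have hpos : ∀ u ∈ Set.Icc 0 a, 0 < lam ^ 2 - f u ^ 2 := fun u hu => by
    nlinarith [h0 u hu, h1 u hu]
  have hcpos : ∀ u ∈ Set.Icc 0 a, 0 < Real.sqrt (lam ^ 2 - f u ^ 2) := fun u hu =>
    Real.sqrt_pos.2 (hpos u hu)
  have hcle : ∀ u, Real.sqrt (lam ^ 2 - f u ^ 2) ≤ lam := fun u =>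
    Real.sqrt_le_iff.2 ⟨hl.le, by nlinarith [sq_nonneg (f u)]⟩
  have hcc : ContinuousOn (fun u => Real.sqrt (lam ^ 2 - f u ^ 2)) (Set.Icc 0 a) :=
    (continuousOn_const.sub (hc.pow 2)).sqrt
  have hφ : ContinuousOn (fun u => lam / Real.sqrt (lam ^ 2 - f u ^ 2)) (Set.Icc 0 a) :=
    continuousOn_const.div hcc fun u hu => (hcpos u hu).ne'
  constructor
  · have h := intervalIntegral.integral_mono_on (μ := MeasureTheory.volume) ha
      (intervalIntegrable_const (c := (1 : ℝ)))
      (hφ.intervalIntegrable_of_Icc ha)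
      (fun u hu => (one_le_div (hcpos u hu)).2 (hcle u))
    simpa using h
  · have h := intervalIntegral.integral_le_sub_of_hasDeriv_right_of_le
      (g := fun u => u - M / lam * Real.sqrt (lam ^ 2 - f u ^ 2))
      (g' := fun u => 1 - M / lam * (-(2 * f u * f' u) / (2 * Real.sqrt (lam ^ 2 - f u ^ 2))))
      (φ := fun u => lam / Real.sqrt (lam ^ 2 - f u ^ 2)) ha
      (continuousOn_id.sub (continuousOn_const.mul hcc))
      (fun u hu => ?_) (hφ.integrableOn_Icc) (fun u hu => ?_)
    · refine h.trans ?_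
      have e1 : 0 ≤ M / lam * Real.sqrt (lam ^ 2 - f a ^ 2) := by positivity
      have e2 : M / lam * Real.sqrt (lam ^ 2 - f 0 ^ 2) ≤ M / lam * lam :=
        mul_le_mul_of_nonneg_left (hcle 0) (by positivity)
      rw [div_mul_cancel₀ _ hl.ne'] at e2
      linarith
    · have e : HasDerivAt (fun u => lam ^ 2 - f u ^ 2) (-(2 * f u * f' u)) u := by
        simpa using ((hd u hu).pow 2).const_sub (lam ^ 2)
      exact ((hasDerivAt_id u).sub ((e.sqrt (hpos u (Set.Ioo_subset_Icc_self hu)).ne').const_mul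
        (M / lam))).hasDerivWithinAt
    · have hu' := Set.Ioo_subset_Icc_self hu
      have hsq := Real.sq_sqrt (hpos u hu').le
      have hcp := hcpos u hu'
      have hcl := hcle u
      have hf : f u * f u ≤ f u * (M * f' u) := mul_le_mul_of_nonneg_left (hM' u hu) (h0 u hu')
      set c := Real.sqrt (lam ^ 2 - f u ^ 2)
      have e : 1 - M / lam * (-(2 * f u * f' u) / (2 * c))
          = (lam * c + M * f u * f' u) / lam / c := by
        field_simp
        ring
      rw [e]
      refine div_le_div_of_nonneg_right ?_ hcp.le
      rw [le_div_iff₀ hl]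
      -- `λ(λ - c) ≤ (λ + c)(λ - c) = f²`
      nlinarith [mul_nonneg hcp.le (sub_nonneg.2 hcl)]


/-- Arc length of the geodesic `γ_{0,λ}` up to horizontal coordinate `x₁` is comparable
to `x₁`: with `f = exp(−F)` and `λ > f(x₁)`,
`x₁ ≤ ∫₀^{x₁} λ/√(λ² − f(u)²) du ≤ x₁ + 1/(−F'(x₁)) ≤ (1 + 1/ε)·x₁`. -/
theorem geodesic_arclength_comparable (R ε : ℝ) (hR : 0 < R) (hε : 0 < ε) (hε1 : ε ≤ 1)
    (F F' : ℝ → ℝ)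
    (hderiv : ∀ x ∈ Set.Ioo (0 : ℝ) R, HasDerivAt F (F' x) x)
    (hneg : ∀ x ∈ Set.Ioo (0 : ℝ) R, F' x < 0)
    (hlow : ∀ x ∈ Set.Ioo (0 : ℝ) R, ε ≤ -x * F' x)
    (hmono : ∀ x ∈ Set.Ioo (0 : ℝ) R, ∀ y ∈ Set.Ioo (0 : ℝ) R, x ≤ y →
      1 / (-F' x) ≤ 1 / (-F' y))
    (hlim : Filter.Tendsto F (nhdsWithin 0 (Set.Ioi 0)) Filter.atTop)
    (x₁ : ℝ) (hx₁ : x₁ ∈ Set.Ioo (0 : ℝ) R) (lam : ℝ)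
    (hlam : Real.exp (-F x₁) < lam) :
    x₁ ≤ (∫ u in (0 : ℝ)..x₁, lam / Real.sqrt (lam ^ 2 - Real.exp (-F u) ^ 2)) ∧
    (∫ u in (0 : ℝ)..x₁, lam / Real.sqrt (lam ^ 2 - Real.exp (-F u) ^ 2)) ≤
      x₁ + 1 / (-F' x₁) ∧
    x₁ + 1 / (-F' x₁) ≤ (1 + 1 / ε) * x₁ := by
  obtain ⟨hx0, hxR⟩ := hx₁
  have hM : 0 < 1 / (-F' x₁) := one_div_pos.2 (neg_pos.2 (hneg x₁ ⟨hx0, hxR⟩))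
  have hin : ∀ u, 0 < u → u ≤ x₁ → u ∈ Set.Ioo (0 : ℝ) R := fun u h h' => ⟨h, h'.trans_lt hxR⟩
  -- The integrand in the statement uses the arbitrary value `F 0`; replacing `f 0` by its limit `0`
  -- makes `f` continuous up to the origin without changing the integral.
  set f : ℝ → ℝ := Function.update (fun u => Real.exp (-F u)) 0 0 with hf
  have hfu : ∀ u, 0 < u → f u = Real.exp (-F u) := fun u hu => by
    simp [hf, Function.update_of_ne hu.ne']
  have hf0 : f 0 = 0 := by simp [hf]
  have hanti : StrictAntiOn F (Set.Ioo 0 R) := by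
    refine strictAntiOn_of_deriv_neg (convex_Ioo 0 R)
      (fun x hx => (hderiv x hx).continuousAt.continuousWithinAt) fun x hx => ?_
    rw [interior_Ioo] at hx
    rw [(hderiv x hx).deriv]
    exact hneg x hx
  have hcont : ContinuousOn f (Set.Icc 0 x₁) := by
    rw [hf, continuousOn_update_iff]
    constructor
    · intro x hx
      have hx' := hin x (lt_of_le_of_ne hx.1.1 (Ne.symm hx.2)) hx.1.2
      exact (hderiv x hx').continuousAt.neg.rexp.continuousWithinAt
    · intro _
      refine (Real.tendsto_exp_neg_atTop_nhds_zero.comp hlim).mono_left (nhdsWithin_mono _ ?_)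
      exact fun x hx => lt_of_le_of_ne hx.1.1 (Ne.symm hx.2)
  have key := arclength_bounds (f := f) (f' := fun u => Real.exp (-F u) * -F' u) (lam := lam)
    hx0.le hM.le hcont ?_ ?_ ?_ ?_
  · have hint : (∫ u in (0 : ℝ)..x₁, lam / Real.sqrt (lam ^ 2 - Real.exp (-F u) ^ 2))
        = ∫ u in (0 : ℝ)..x₁, lam / Real.sqrt (lam ^ 2 - f u ^ 2) := by
      refine intervalIntegral.integral_congr_ae (Filter.Eventually.of_forall fun u hu => ?_)
      rw [Set.uIoc_of_le hx0.le] at hu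
      rw [hfu u hu.1]
    rw [hint]
    refine ⟨key.1, key.2, ?_⟩
    have hl := hlow x₁ ⟨hx0, hxR⟩
    have h3 : 1 / (-F' x₁) ≤ 1 / ε * x₁ := by
      rw [div_mul_eq_mul_div, one_mul,
        div_le_div_iff₀ (neg_pos.2 (hneg x₁ ⟨hx0, hxR⟩)) hε]
      linarith
    linarith
  · intro u hu
    rcases hu.1.eq_or_lt with h | h
    · rw [← h, hf0]
    · rw [hfu u h]
      positivity
  · intro u hu
    rcases hu.1.eq_or_lt with h | h
    · rw [← h, hf0]
      exact (Real.exp_pos _).trans hlam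
    · rw [hfu u h]
      refine lt_of_le_of_lt (Real.exp_le_exp.2 (neg_le_neg ?_)) hlam
      exact hanti.antitoneOn (hin u h hu.2) ⟨hx0, hxR⟩ hu.2
  · intro u hu
    refine (hderiv u (hin u hu.1 hu.2.le)).neg.exp.congr_of_eventuallyEq ?_
    filter_upwards [lt_mem_nhds hu.1] with v hv using hfu v hv
  · intro u hu
    have hu' := hin u hu.1 hu.2.le
    have hp : 0 < -F' u := neg_pos.2 (hneg u hu')
    have h1 : 1 ≤ 1 / (-F' x₁) * -F' u :=
      (div_le_iff₀ hp).1 (hmono u hu' x₁ ⟨hx0, hxR⟩ hu.2.le)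
    rw [hfu u hu.1]
    have := mul_le_mul_of_nonneg_left h1 (Real.exp_pos (-F u)).le
    linarith
end

section
/- Let 0 ≤ x₁ < b and let f : [x₁, b] → ℝ be continuous with 0 ≤ f(u) < f(b) for all u ∈ [x₁, b) and f(b) > 0. Set λ* = f(b), r* = b − x₁, suppose the improper integrals h = ∫_{x₁}^{b} f(u)²/√(λ*² − f(u)²) du and r = ∫_{x₁}^{b} λ*/√(λ*² − f(u)²) du are finite. Then f(b)·(r − r*) ≤ h ≤ 2·f(b)·(r − r*). -/
/-!
Write `L = f b`, `F = f u` and `s = √(L² − F²) > 0`, so that `F² = (L − s)(L + s)`. The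
displacement integrand is `L / s − 1 = (L − s) / s`, while the height integrand is
`F² / s = (L + s)(L − s) / s`. Since `0 ≤ s ≤ L`, the ratio `L + s` of the two lies between `L`
and `2 L`; integrating these pointwise bounds over `(x₁, b)` gives both inequalities.
-/

/-- The comparison of integrands: the ratio of the height integrand to the displacement integrand
lies between `L` and `2 * L`. -/
lemma integrand_bounds {L F : ℝ} (hF : 0 ≤ F) (hFL : F < L) :
    L * (L / Real.sqrt (L ^ 2 - F ^ 2) - 1) ≤ F ^ 2 / Real.sqrt (L ^ 2 - F ^ 2) ∧
    F ^ 2 / Real.sqrt (L ^ 2 - F ^ 2) ≤ 2 * L * (L / Real.sqrt (L ^ 2 - F ^ 2) - 1) := by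
  have hpos : 0 < L ^ 2 - F ^ 2 := by nlinarith
  have hs : 0 < Real.sqrt (L ^ 2 - F ^ 2) := Real.sqrt_pos.mpr hpos
  have hsq : Real.sqrt (L ^ 2 - F ^ 2) ^ 2 = L ^ 2 - F ^ 2 := Real.sq_sqrt hpos.le
  have hsL : Real.sqrt (L ^ 2 - F ^ 2) ≤ L :=
    Real.sqrt_le_iff.mpr ⟨by linarith, by nlinarith [sq_nonneg F]⟩
  generalize Real.sqrt (L ^ 2 - F ^ 2) = s at *
  have hdisp : L / s - 1 = (L - s) / s := by field_simp
  rw [hdisp, ← mul_div_assoc, ← mul_div_assoc]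
  constructor
  · gcongr
    nlinarith [mul_nonneg hs.le (sub_nonneg.mpr hsL)]
  · gcongr
    nlinarith [sq_nonneg (L - s)]


/-- The height `h` of the turning point and the horizontal displacement `r − r*`
satisfy `f(b)·(r − r*) ≤ h ≤ 2·f(b)·(r − r*)`, where `λ* = f(b)`, `r* = b − x₁`,
`h = ∫_{x₁}^b f(u)²/√(λ*² − f(u)²) du` and `r = ∫_{x₁}^b λ*/√(λ*² − f(u)²) du`. -/
theorem height_displacement_comparison (x₁ b : ℝ) (hx : 0 ≤ x₁) (hxb : x₁ < b)
    (f : ℝ → ℝ) (hcont : ContinuousOn f (Set.Icc x₁ b))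
    (hfnn : ∀ u ∈ Set.Ico x₁ b, 0 ≤ f u)
    (hflt : ∀ u ∈ Set.Ico x₁ b, f u < f b)
    (hfb : 0 < f b)
    (hInt1 : IntervalIntegrable
      (fun u => f u ^ 2 / Real.sqrt (f b ^ 2 - f u ^ 2)) MeasureTheory.volume x₁ b)
    (hInt2 : IntervalIntegrable
      (fun u => f b / Real.sqrt (f b ^ 2 - f u ^ 2)) MeasureTheory.volume x₁ b) :
    f b * ((∫ u in x₁..b, f b / Real.sqrt (f b ^ 2 - f u ^ 2)) - (b - x₁)) ≤
      (∫ u in x₁..b, f u ^ 2 / Real.sqrt (f b ^ 2 - f u ^ 2)) ∧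
    (∫ u in x₁..b, f u ^ 2 / Real.sqrt (f b ^ 2 - f u ^ 2)) ≤
      2 * f b * ((∫ u in x₁..b, f b / Real.sqrt (f b ^ 2 - f u ^ 2)) - (b - x₁)) := by
  have hone : IntervalIntegrable (fun _ : ℝ => (1 : ℝ)) MeasureTheory.volume x₁ b :=
    intervalIntegrable_const
  have hdisp := hInt2.sub hone
  have hint : (∫ u in x₁..b, f b / Real.sqrt (f b ^ 2 - f u ^ 2)) - (b - x₁) =
      ∫ u in x₁..b, (f b / Real.sqrt (f b ^ 2 - f u ^ 2) - 1) := by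
    rw [intervalIntegral.integral_sub hInt2 hone]
    simp
  rw [hint, ← intervalIntegral.integral_const_mul, ← intervalIntegral.integral_const_mul]
  -- At `u = b` the denominators vanish, so the integrands are compared on the open interval only.
  have hpt : ∀ u ∈ Set.Ioo x₁ b, _ := fun u hu =>
    integrand_bounds (hfnn u (Set.Ioo_subset_Ico_self hu)) (hflt u (Set.Ioo_subset_Ico_self hu))
  exact ⟨intervalIntegral.integral_mono_on_of_le_Ioo hxb.le (hdisp.const_mul _) hInt1
      fun u hu => (hpt u hu).1,
    intervalIntegral.integral_mono_on_of_le_Ioo hxb.le hInt1 (hdisp.const_mul _)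
      fun u hu => (hpt u hu).2⟩
end

section
/- Let 0 < x₁ < b and let F : [x₁, b] → ℝ be differentiable with F'(u) < 0 for all u ∈ [x₁, b] and with u ↦ 1/(−F'(u)) nondecreasing on [x₁, b]. Set f = exp(−F) and assume u ↦ f(u)²/√(f(b)² − f(u)²) is integrable on (x₁, b). Then ∫_{x₁}^{b} f(u)²/√(f(b)² − f(u)²) du ≤ (1/(−F'(b)))·√(f(b)² − f(x₁)²). -/
/-!
Write `f = exp (-F)` and `K = 1 / (-F' b)`. The function `g u = -K * √(f b ^ 2 - f u ^ 2)` is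
continuous on `[x₁, b]` and vanishes at `b`, and on `(x₁, b)`
`g' u = K * (-F' u) * f u ^ 2 / √(f b ^ 2 - f u ^ 2)`. Monotonicity of `1 / (-F')` gives
`K * (-F' u) ≥ 1`, so the integrand is at most `g'`, and its integral is at most `g b - g x₁`.
The inequality form of the fundamental theorem of calculus used here requires integrability of the
integrand only, not of `g'`.
-/


/-- Exact upper bound for the height of a control ball: with `f = exp(−F)`, `F' < 0`,
and `u ↦ 1/(−F'(u))` nondecreasing on `[x₁,b]`,
`∫_{x₁}^b f(u)²/√(f(b)² − f(u)²) du ≤ (1/(−F'(b)))·√(f(b)² − f(x₁)²)`. -/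
theorem height_exact_upper_bound (x₁ b : ℝ) (hx₁ : 0 < x₁) (hxb : x₁ < b)
    (F F' : ℝ → ℝ)
    (hderiv : ∀ u ∈ Set.Icc x₁ b, HasDerivWithinAt F (F' u) (Set.Icc x₁ b) u)
    (hneg : ∀ u ∈ Set.Icc x₁ b, F' u < 0)
    (hmono : ∀ u ∈ Set.Icc x₁ b, ∀ v ∈ Set.Icc x₁ b, u ≤ v →
      1 / (-F' u) ≤ 1 / (-F' v))
    (hInt : IntervalIntegrable
      (fun u => Real.exp (-F u) ^ 2 /
        Real.sqrt (Real.exp (-F b) ^ 2 - Real.exp (-F u) ^ 2))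
      MeasureTheory.volume x₁ b) :
    ∫ u in x₁..b, Real.exp (-F u) ^ 2 /
        Real.sqrt (Real.exp (-F b) ^ 2 - Real.exp (-F u) ^ 2) ≤
      (1 / (-F' b)) * Real.sqrt (Real.exp (-F b) ^ 2 - Real.exp (-F x₁) ^ 2) := by
  have hcont : ContinuousOn F (Set.Icc x₁ b) := fun u hu => (hderiv u hu).continuousWithinAt
  have hd : ∀ u ∈ Set.Ioo x₁ b, HasDerivAt F (F' u) u := fun u hu =>
    (hderiv u (Set.Ioo_subset_Icc_self hu)).hasDerivAt (Icc_mem_nhds hu.1 hu.2)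
  have hanti : StrictAntiOn F (Set.Icc x₁ b) := by
    refine strictAntiOn_of_deriv_neg (convex_Icc _ _) hcont fun u hu => ?_
    rw [interior_Icc] at hu
    rw [(hd u hu).deriv]
    exact hneg u (Set.Ioo_subset_Icc_self hu)
  have hb : b ∈ Set.Icc x₁ b := Set.right_mem_Icc.2 hxb.le
  have hFTC := intervalIntegral.integral_le_sub_of_hasDeriv_right_of_le
    (g := fun u => -((1 / (-F' b)) *
      Real.sqrt (Real.exp (-F b) ^ 2 - Real.exp (-F u) ^ 2)))
    (g' := fun u => (1 / (-F' b)) * (-F' u) * (Real.exp (-F u) ^ 2 /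
      Real.sqrt (Real.exp (-F b) ^ 2 - Real.exp (-F u) ^ 2)))
    hxb.le ?_ ?_ ((intervalIntegrable_iff_integrableOn_Icc_of_le hxb.le).1 hInt) ?_
  · simpa using hFTC
  · fun_prop
  · intro u hu
    have hlt : F b < F u := hanti (Set.Ioo_subset_Icc_self hu) hb hu.2
    have hpos : 0 < Real.exp (-F b) ^ 2 - Real.exp (-F u) ^ 2 := by
      have : Real.exp (-F u) < Real.exp (-F b) := Real.exp_lt_exp.2 (by linarith)
      have := pow_lt_pow_left₀ this (Real.exp_pos _).le two_ne_zero
      linarith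
    have h := (((((hd u hu).neg.exp.pow 2).const_sub (Real.exp (-F b) ^ 2)).sqrt
      hpos.ne').const_mul (1 / (-F' b))).neg
    refine HasDerivAt.hasDerivWithinAt (h.congr_deriv ?_)
    simp only [Pi.neg_apply, Pi.pow_apply]
    have hs := (Real.sqrt_pos.2 hpos).ne'
    have hFb := (hneg b hb).ne
    field_simp
    push_cast
    ring
  · intro u hu
    have hu' := Set.Ioo_subset_Icc_self hu
    have hFu : 0 < -F' u := neg_pos.2 (hneg u hu')
    have h1 : 1 ≤ 1 / (-F' b) * (-F' u) := (div_le_iff₀ hFu).1 (hmono u hu' b hb hu.2.le)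
    exact le_mul_of_one_le_left (by positivity) h1
end

section
/- Let a > 0 and let F : (0,a] → ℝ be twice continuously differentiable with F'(u) < 0 for all u ∈ (0,a], lim_{u→0⁺} F(u) = +∞, lim_{u→0⁺} 1/(−F'(u)) = 0, and suppose u ↦ F''(u)/F'(u)² is bounded on (0,a]. Set f = exp(−F) and λ = f(a). Then both improper integrals below converge and are equal: ∫₀^a f(u)²/√(λ² − f(u)²) du = ∫₀^a (F''(u)/F'(u)²)·√(λ² − f(u)²) du. -/
/-!
Write `f = exp (-F)`, `λ = f a` and `S = √(λ² - f²)`. Since `(f²)' = -2 F' f²`, one has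
`S' = F' f² / S` on `(0, a)`, so the boundary term `S / F'` of the integration by parts satisfies
`(S / F')' = f² / S - (F'' / F'²) S`. It vanishes at `a` because `S a = 0`, and it tends to `0` at
`0⁺` because `S` tends to `λ` and `1 / F'` to `0`. The function `(F'' / F'²) S` is bounded and
continuous on `(0, a]`, hence integrable. Thus `G u = S u / F' u + ∫₀^u (F'' / F'²) S`, extended
by `G 0 = 0`, is continuous on `[0, a]` with derivative `f² / S ≥ 0` on `(0, a)`: a continuous
function with nonnegative derivative has an integrable derivative, which settles the singularity of
`f² / S` at `a`, and the fundamental theorem of calculus gives `∫₀^a f² / S = G a - G 0`.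
-/

/-- The derivative of the boundary term `√(c² - exp (-F)²) / F'`, away from the turning point. -/
theorem hasDerivAt_boundary_term {F F' : ℝ → ℝ} {u c d : ℝ}
    (h1 : HasDerivAt F (F' u) u) (h2 : HasDerivAt F' d u) (hne : F' u ≠ 0)
    (hlt : 0 < c ^ 2 - Real.exp (-F u) ^ 2) :
    HasDerivAt (fun v => Real.sqrt (c ^ 2 - Real.exp (-F v) ^ 2) / F' v)
      (Real.exp (-F u) ^ 2 / Real.sqrt (c ^ 2 - Real.exp (-F u) ^ 2)
        - (d / F' u ^ 2) * Real.sqrt (c ^ 2 - Real.exp (-F u) ^ 2)) u := by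
  have hS := (((h1.neg.exp).pow 2).const_sub (c ^ 2)).sqrt (by simpa using hlt.ne')
  have hs : Real.sqrt (c ^ 2 - Real.exp (-F u) ^ 2) ≠ 0 := (Real.sqrt_pos.2 hlt).ne'
  refine (hS.div h2 hne).congr_deriv ?_
  simp only [Pi.neg_apply, Pi.pow_apply]
  field_simp
  push_cast
  ring

/-- Integration-by-parts identity for the height of the turning point: with
`f = exp(−F)` and `λ = f(a)`, both improper integrals converge and
`∫₀^a f(u)²/√(λ² − f(u)²) du = ∫₀^a (F''(u)/F'(u)²)·√(λ² − f(u)²) du`. -/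
theorem turning_height_integration_by_parts (a : ℝ) (ha : 0 < a) (F F' F'' : ℝ → ℝ)
    (hd1 : ∀ u ∈ Set.Ioc (0 : ℝ) a, HasDerivAt F (F' u) u)
    (hd2 : ∀ u ∈ Set.Ioc (0 : ℝ) a, HasDerivAt F' (F'' u) u)
    (hcont : ContinuousOn F'' (Set.Ioc (0 : ℝ) a))
    (hneg : ∀ u ∈ Set.Ioc (0 : ℝ) a, F' u < 0)
    (hlimF : Filter.Tendsto F (nhdsWithin 0 (Set.Ioi 0)) Filter.atTop)
    (hlimF' : Filter.Tendsto (fun u => 1 / (-F' u)) (nhdsWithin 0 (Set.Ioi 0)) (nhds 0))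
    (hbd : ∃ M : ℝ, ∀ u ∈ Set.Ioc (0 : ℝ) a, |F'' u / F' u ^ 2| ≤ M) :
    IntervalIntegrable (fun u => Real.exp (-F u) ^ 2 /
        Real.sqrt (Real.exp (-F a) ^ 2 - Real.exp (-F u) ^ 2))
      MeasureTheory.volume 0 a ∧
    IntervalIntegrable (fun u => (F'' u / F' u ^ 2) *
        Real.sqrt (Real.exp (-F a) ^ 2 - Real.exp (-F u) ^ 2))
      MeasureTheory.volume 0 a ∧
    (∫ u in (0 : ℝ)..a, Real.exp (-F u) ^ 2 /
        Real.sqrt (Real.exp (-F a) ^ 2 - Real.exp (-F u) ^ 2)) =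
      ∫ u in (0 : ℝ)..a, (F'' u / F' u ^ 2) *
        Real.sqrt (Real.exp (-F a) ^ 2 - Real.exp (-F u) ^ 2) := by
  obtain ⟨M, hM⟩ := hbd
  have hFc : ContinuousOn F (Set.Ioc 0 a) := fun u hu => (hd1 u hu).continuousAt.continuousWithinAt
  have hF'c : ContinuousOn F' (Set.Ioc 0 a) :=
    fun u hu => (hd2 u hu).continuousAt.continuousWithinAt
  have hF'ne : ∀ u ∈ Set.Ioc 0 a, F' u ≠ 0 := fun u hu => (hneg u hu).ne
  have hanti : StrictAntiOn F (Set.Ioc 0 a) := by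
    refine strictAntiOn_of_deriv_neg (convex_Ioc 0 a) hFc fun u hu => ?_
    have hu' := interior_subset hu
    rw [(hd1 u hu').deriv]
    exact hneg u hu'
  have hpos : ∀ u ∈ Set.Ioo 0 a, 0 < Real.exp (-F a) ^ 2 - Real.exp (-F u) ^ 2 := by
    intro u hu
    have h1 : F a < F u := hanti ⟨hu.1, hu.2.le⟩ ⟨ha, le_rfl⟩ hu.2
    have h2 : Real.exp (-F u) < Real.exp (-F a) := Real.exp_lt_exp.2 (by linarith)
    have h3 := pow_lt_pow_left₀ h2 (Real.exp_pos _).le two_ne_zero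
    linarith
  set S : ℝ → ℝ := fun u => Real.sqrt (Real.exp (-F a) ^ 2 - Real.exp (-F u) ^ 2) with hSdef
  set h : ℝ → ℝ := fun u => (F'' u / F' u ^ 2) * S u with hhdef
  have hSc : ContinuousOn S (Set.Ioc 0 a) :=
    (continuousOn_const.sub ((Real.continuous_exp.comp_continuousOn hFc.neg).pow 2)).sqrt
  have hhc : ContinuousOn h (Set.Ioc 0 a) :=
    (hcont.div (hF'c.pow 2) fun u hu => pow_ne_zero 2 (hF'ne u hu)).mul hSc
  have hSle : ∀ u, S u ≤ Real.exp (-F a) := fun u =>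
    Real.sqrt_le_iff.2 ⟨(Real.exp_pos _).le, by nlinarith [sq_nonneg (Real.exp (-F u))]⟩
  have hhI : IntervalIntegrable h MeasureTheory.volume 0 a := by
    rw [intervalIntegrable_iff_integrableOn_Ioc_of_le ha.le]
    refine MeasureTheory.IntegrableOn.of_bound (by simp)
      (hhc.aestronglyMeasurable measurableSet_Ioc) (M * Real.exp (-F a)) ?_
    filter_upwards [MeasureTheory.ae_restrict_mem measurableSet_Ioc] with u hu
    rw [Real.norm_eq_abs, hhdef, abs_mul, abs_of_nonneg (Real.sqrt_nonneg _)]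
    exact mul_le_mul (hM u hu) (hSle u) (Real.sqrt_nonneg _) ((abs_nonneg _).trans (hM u hu))
  -- `F' 0` is arbitrary, so the boundary term is given its limit value at `0` by hand.
  set g : ℝ → ℝ := Function.update (fun u => S u / F' u) 0 0 with hgdef
  have hgeq : ∀ u, u ≠ 0 → g u = S u / F' u := fun u hu => Function.update_of_ne hu _ _
  have hgc : ContinuousOn g (Set.Icc 0 a) := by
    intro u hu
    rcases hu.1.eq_or_lt with rfl | h0
    · have hf : Filter.Tendsto (fun u => Real.exp (-F u)) (nhdsWithin 0 (Set.Ioi 0)) (nhds 0) :=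
        Real.tendsto_exp_neg_atTop_nhds_zero.comp hlimF
      have hS0 := ((hf.pow 2).const_sub (Real.exp (-F a) ^ 2)).sqrt
      have hlim := (hS0.mul hlimF').neg
      rw [mul_zero, neg_zero] at hlim
      rw [hgdef, continuousWithinAt_update_same]
      refine (hlim.mono_left (nhdsWithin_mono _ ?_)).congr fun v => ?_
      · rintro v ⟨hv, hv0⟩
        exact lt_of_le_of_ne hv.1 (Ne.symm hv0)
      · simp only [hSdef, div_eq_mul_inv, inv_neg, one_mul, mul_neg, neg_neg]
    · have hq : ContinuousWithinAt (fun u => S u / F' u) (Set.Ioc 0 a) u :=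
        (hSc.div hF'c hF'ne) u ⟨h0, hu.2⟩
      have hq' : ContinuousWithinAt (fun u => S u / F' u) (Set.Icc 0 a) u := by
        refine hq.mono_of_mem_nhdsWithin ?_
        filter_upwards [self_mem_nhdsWithin, mem_nhdsWithin_of_mem_nhds (lt_mem_nhds h0)]
          with v hv hv0
        exact ⟨hv0, hv.2⟩
      refine hq'.congr_of_eventuallyEq ?_ (hgeq u h0.ne')
      filter_upwards [mem_nhdsWithin_of_mem_nhds (lt_mem_nhds h0)] with v hv
      exact hgeq v (ne_of_gt hv)
  set G : ℝ → ℝ := fun u => g u + ∫ v in (0 : ℝ)..u, h v with hGdef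
  have hGc : ContinuousOn G (Set.Icc 0 a) := by
    have hi := intervalIntegral.continuousOn_primitive_interval' hhI Set.left_mem_uIcc
    rw [Set.uIcc_of_le ha.le] at hi
    exact hgc.add hi
  have hGd : ∀ u ∈ Set.Ioo 0 a, HasDerivAt G (Real.exp (-F u) ^ 2 / S u) u := by
    intro u hu
    have hu' : u ∈ Set.Ioc 0 a := ⟨hu.1, hu.2.le⟩
    have hgd := (hasDerivAt_boundary_term (hd1 u hu') (hd2 u hu') (hF'ne u hu')
      (hpos u hu)).congr_of_eventuallyEq (f₁ := g) (by
        filter_upwards [lt_mem_nhds hu.1] with v hv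
        exact hgeq v (ne_of_gt hv))
    have hhc' : ContinuousOn h (Set.Ioo 0 a) := hhc.mono Set.Ioo_subset_Ioc_self
    have hhd : HasDerivAt (fun u => ∫ v in (0 : ℝ)..u, h v) (h u) u := by
      refine intervalIntegral.integral_hasDerivAt_right
        (hhI.mono_set ?_) (hhc'.stronglyMeasurableAtFilter isOpen_Ioo u hu)
        (hhc'.continuousAt (isOpen_Ioo.mem_nhds hu))
      rw [Set.uIcc_of_le hu.1.le, Set.uIcc_of_le ha.le]
      exact Set.Icc_subset_Icc_right hu.2.le
    exact (hgd.add hhd).congr_deriv (sub_add_cancel _ _)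
  have hI : IntervalIntegrable (fun u => Real.exp (-F u) ^ 2 / S u) MeasureTheory.volume 0 a := by
    rw [intervalIntegrable_iff_integrableOn_Ioc_of_le ha.le]
    exact intervalIntegral.integrableOn_deriv_of_nonneg hGc hGd
      fun u _ => div_nonneg (sq_nonneg _) (Real.sqrt_nonneg _)
  refine ⟨hI, hhI, ?_⟩
  have hg0 : g 0 = 0 := Function.update_self _ _ _
  have hga : g a = 0 := by simp [hgeq a ha.ne', hSdef]
  have hG0 : G 0 = 0 := by simp [hGdef, hg0]
  have hGa : G a = ∫ v in (0 : ℝ)..a, h v := by simp [hGdef, hga]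
  rw [intervalIntegral.integral_eq_sub_of_hasDerivAt_of_le ha.le hGc hGd hI, hG0, hGa, sub_zero]
end

section
/- Let F : (0,R) → ℝ be twice differentiable and satisfy the geometric structure conditions with constants C ≥ 1 and ε ∈ (0,1). Then there exists a constant K ≥ 1, depending only on C and ε, such that for every r₀ with 0 < r₀ < R/2: (1/K)·exp(−F(r₀))/F'(r₀)² ≤ ∫₀^{r₀} exp(−F(r))/(−F'(r)) dr ≤ K·exp(−F(r₀))/F'(r₀)². (This integral is, up to constants, the Lebesgue area of the control ball B(0,r₀) of the metric dt² = dx² + e^{2F(x)}dy².) -/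
/-!
Write `f = exp (-F)` and `h = f / F'²`. Differentiating gives
`h' = f / (-F') * (1 + 2 F'' / F'²)`. Since `F'' > 0`, the last factor is at least `1`; and since
`F'' / (-F') ≤ C / x` while `-x F' ≥ ε`, it is at most `K = 1 + 2 C / ε`. Moreover `h` tends to `0`
at the origin, because `F → +∞` there and `-F'` is decreasing, so `F'²` is bounded below near `0`.
Integrating `f / (-F') ≤ h' ≤ K f / (-F')` over `(0, r₀)` yields both bounds.
-/

open Set Filter Topology

/-- A quotient `exp (-F) / D` whose denominator is bounded below by a positive constant, set to `0`
at the origin, is continuous up to the origin when `F → +∞` there. -/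
lemma continuousOn_update_exp_neg_div {F D : ℝ → ℝ} {r c : ℝ} (hc : 0 < c)
    (hF : ContinuousOn F (Ioc 0 r)) (hD : ContinuousOn D (Ioc 0 r))
    (hlim : Tendsto F (𝓝[>] 0) atTop) (hcD : ∀ x ∈ Ioc 0 r, c ≤ D x) :
    ContinuousOn (Function.update (fun x => Real.exp (-F x) / D x) 0 0) (Icc 0 r) := by
  have hs : Icc 0 r \ {(0 : ℝ)} = Ioc 0 r := Icc_sdiff_left
  rw [continuousOn_update_iff, hs]
  refine ⟨(hF.neg.rexp).div hD fun x hx => (hc.trans_le (hcD x hx)).ne', fun _ => ?_⟩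
  have hlim' : Tendsto F (𝓝[Ioc 0 r] 0) atTop :=
    hlim.mono_left (nhdsWithin_mono _ fun x hx => hx.1)
  have h0 : Tendsto (fun x => Real.exp (-F x) / c) (𝓝[Ioc 0 r] 0) (𝓝 0) := by
    simpa using (Real.tendsto_exp_neg_atTop_nhds_zero.comp hlim').div_const c
  refine tendsto_of_tendsto_of_tendsto_of_le_of_le' tendsto_const_nhds h0 ?_ ?_
  · filter_upwards [self_mem_nhdsWithin] with x hx
    exact div_nonneg (Real.exp_pos _).le (hc.le.trans (hcD x hx))
  · filter_upwards [self_mem_nhdsWithin] with x hx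
    exact div_le_div_of_nonneg_left (Real.exp_pos _).le hc (hcD x hx)

lemma hasDerivAt_exp_neg_div_sq {F F' : ℝ → ℝ} {x F'' : ℝ} (h1 : HasDerivAt F (F' x) x)
    (h2 : HasDerivAt F' F'' x) (hneg : F' x < 0) :
    HasDerivAt (fun y => Real.exp (-F y) / F' y ^ 2)
      (Real.exp (-F x) / (-F' x) * (1 + 2 * (F'' / F' x ^ 2))) x := by
  have hne := hneg.ne
  refine (h1.neg.exp.div (h2.pow 2) (pow_ne_zero 2 hne)).congr_deriv ?_
  simp only [Pi.neg_apply, Pi.pow_apply]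
  field_simp
  ring

/-- Area of the control ball centered at the origin: under the geometric structure
conditions with constants `C ≥ 1` and `ε ∈ (0,1)`, there is `K ≥ 1` depending only on
`C` and `ε` such that for all `0 < r₀ < R/2`,
`(1/K)·f(r₀)/F'(r₀)² ≤ ∫₀^{r₀} f(r)/(−F'(r)) dr ≤ K·f(r₀)/F'(r₀)²`
where `f = exp(−F)`. -/
theorem ball_area_estimate (C ε : ℝ) (hC : 1 ≤ C) (hε : ε ∈ Set.Ioo (0 : ℝ) 1) :
    ∃ K : ℝ, 1 ≤ K ∧
      ∀ (R : ℝ) (F F' F'' : ℝ → ℝ), 0 < R →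
        (∀ x ∈ Set.Ioo (0 : ℝ) R, HasDerivAt F (F' x) x) →
        (∀ x ∈ Set.Ioo (0 : ℝ) R, HasDerivAt F' (F'' x) x) →
        Filter.Tendsto F (nhdsWithin 0 (Set.Ioi 0)) Filter.atTop →
        (∀ x ∈ Set.Ioo (0 : ℝ) R, F' x < 0) →
        (∀ x ∈ Set.Ioo (0 : ℝ) R, 0 < F'' x) →
        (∀ r x : ℝ, 0 < r / 2 → r / 2 < x → x < 2 * r → 2 * r < R →
          (1 / C) * (-F' r) ≤ -F' x ∧ -F' x ≤ C * (-F' r)) →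
        (∀ x ∈ Set.Ioo (0 : ℝ) R, ∀ y ∈ Set.Ioo (0 : ℝ) R, x ≤ y →
          1 / (-(x * F' x)) ≤ 1 / (-(y * F' y))) →
        (∀ x ∈ Set.Ioo (0 : ℝ) R, ε ≤ -(x * F' x)) →
        (∀ x ∈ Set.Ioo (0 : ℝ) R,
          (1 / C) * (1 / x) ≤ F'' x / (-F' x) ∧ F'' x / (-F' x) ≤ C * (1 / x)) →
        ∀ r₀ : ℝ, 0 < r₀ → r₀ < R / 2 →
          (1 / K) * (Real.exp (-F r₀) / F' r₀ ^ 2) ≤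
              (∫ r in (0 : ℝ)..r₀, Real.exp (-F r) / (-F' r)) ∧
          (∫ r in (0 : ℝ)..r₀, Real.exp (-F r) / (-F' r)) ≤
              K * (Real.exp (-F r₀) / F' r₀ ^ 2) := by
  obtain ⟨hε0, -⟩ := hε
  have hCε : 0 ≤ C / ε := by positivity
  refine ⟨1 + 2 * (C / ε), by linarith, ?_⟩
  intro R F F' F'' _ hF hF' hlim hneg hpos _ _ hxε hF''C r₀ hr0 hr
  set K := 1 + 2 * (C / ε)
  have hK : 0 < K := by positivity
  have hsub : ∀ x ∈ Ioc 0 r₀, x ∈ Ioo 0 R := fun x hx => ⟨hx.1, by linarith [hx.2]⟩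
  have hr0R : r₀ ∈ Ioo 0 R := hsub r₀ ⟨hr0, le_rfl⟩
  have hcF : ContinuousOn F (Ioc 0 r₀) := fun x hx =>
    (hF x (hsub x hx)).continuousAt.continuousWithinAt
  have hcF' : ContinuousOn F' (Ioc 0 r₀) := fun x hx =>
    (hF' x (hsub x hx)).continuousAt.continuousWithinAt
  have hmono : MonotoneOn F' (Ioo 0 R) := by
    refine monotoneOn_of_deriv_nonneg (convex_Ioo 0 R)
      (fun x hx => (hF' x hx).continuousAt.continuousWithinAt) ?_ ?_
    · rw [interior_Ioo]
      exact fun x hx => (hF' x hx).differentiableAt.differentiableWithinAt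
    · rw [interior_Ioo]
      exact fun x hx => (hF' x hx).deriv ▸ (hpos x hx).le
  have hg0 : 0 < -F' r₀ := neg_pos.2 (hneg r₀ hr0R)
  have hge : ∀ x ∈ Ioc 0 r₀, -F' r₀ ≤ -F' x := fun x hx =>
    neg_le_neg (hmono (hsub x hx) hr0R hx.2)
  have hge2 : ∀ x ∈ Ioc 0 r₀, F' r₀ ^ 2 ≤ F' x ^ 2 := fun x hx => by
    nlinarith [hge x hx]
  -- The integrand is a junk value at `0`; changing it there does not affect integrability.
  have hint : MeasureTheory.IntegrableOn (fun x => Real.exp (-F x) / (-F' x)) (Icc 0 r₀) := by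
    have h := (continuousOn_update_exp_neg_div hg0 hcF hcF'.neg hlim hge).integrableOn_Icc
      (μ := MeasureTheory.volume)
    rw [integrableOn_Icc_iff_integrableOn_Ioc] at h ⊢
    exact h.congr_fun (fun x hx => Function.update_of_ne hx.1.ne' _ _) measurableSet_Ioc
  have hcont := continuousOn_update_exp_neg_div (pow_pos hg0 2) hcF (hcF'.pow 2) hlim
    (fun x hx => by simpa using hge2 x hx)
  set h := Function.update (fun x => Real.exp (-F x) / (F' ^ 2) x) 0 0 with hh
  have h_zero : h 0 = 0 := by simp [hh]
  have h_r0 : h r₀ = Real.exp (-F r₀) / F' r₀ ^ 2 := by simp [hh, hr0.ne']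
  have hderiv : ∀ x ∈ Ioo 0 r₀, HasDerivWithinAt h
      (Real.exp (-F x) / (-F' x) * (1 + 2 * (F'' x / F' x ^ 2))) (Ioi x) x := fun x hx => by
    have hxR := hsub x ⟨hx.1, hx.2.le⟩
    refine ((hasDerivAt_exp_neg_div_sq (hF x hxR) (hF' x hxR)
      (hneg x hxR)).congr_of_eventuallyEq ?_).hasDerivWithinAt
    filter_upwards [lt_mem_nhds hx.1] with y hy
    simp [hh, hy.ne']
  have hφ : ∀ x ∈ Ioo 0 r₀, 0 ≤ Real.exp (-F x) / (-F' x) := fun x hx =>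
    div_nonneg (Real.exp_pos _).le (neg_pos.2 (hneg x (hsub x ⟨hx.1, hx.2.le⟩))).le
  have hratio : ∀ x ∈ Ioo 0 r₀, F'' x / F' x ^ 2 ≤ C / ε := fun x hx => by
    have hxR := hsub x ⟨hx.1, hx.2.le⟩
    have hg := neg_pos.2 (hneg x hxR)
    calc F'' x / F' x ^ 2 = F'' x / (-F' x) / (-F' x) := by rw [div_div]; ring
      _ ≤ C * (1 / x) / (-F' x) := by gcongr; exact (hF''C x hxR).2
      _ = C / (-(x * F' x)) := by
        rw [mul_one_div, div_div, mul_neg]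
      _ ≤ C / ε := by gcongr; exact hxε x hxR
  have hupper := intervalIntegral.integral_le_sub_of_hasDeriv_right_of_le hr0.le hcont hderiv hint
    fun x hx => by
      have := div_nonneg (hpos x (hsub x ⟨hx.1, hx.2.le⟩)).le (sq_nonneg (F' x))
      exact le_mul_of_one_le_right (hφ x hx) (by linarith)
  have hlower := intervalIntegral.sub_le_integral_of_hasDeriv_right_of_le hr0.le hcont hderiv
    (hint.const_mul K) fun x hx => by
      rw [mul_comm]
      exact mul_le_mul_of_nonneg_right (by linarith [hratio x hx]) (hφ x hx)
  rw [intervalIntegral.integral_const_mul] at hlower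
  rw [h_zero, h_r0, sub_zero] at hupper hlower
  constructor
  · rw [one_div, inv_mul_le_iff₀ hK]
    exact hlower
  · exact hupper.trans (le_mul_of_one_le_left (by positivity) (by linarith))
end

section
/- Let R > 0 and let F : (0,R) → ℝ be differentiable with F'(u) < 0 for all u and with F' nondecreasing on (0,R) (i.e. F convex). Set f = exp(−F). Then for every z ∈ (0,R): (a) f(z − w) ≤ f(z)·exp(F'(z)·w) for all w with 0 ≤ w < z; and (b) for every real β > −1, ∫₀^{z} f(z − w)·w^β dw ≤ f(z)·Γ(β+1)/(−F'(z))^{β+1}, where Γ denotes the Gamma function. -/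
/-!
By the mean value theorem `F z - F (z - w) = F' c * w` for some `c ∈ (z - w, z)`, and monotonicity of
`F'` bounds this by `F' z * w`: the graph of `F` lies above its tangent line at `z`. Exponentiating
gives the pointwise bound. Multiplying it by `w ^ β`, integrating, and enlarging the domain from
`(0, z)` to `(0, ∞)` turns the right-hand side into a Gamma integral with rate `-F' z > 0`.
-/

open MeasureTheory Set in
/-- A pointwise exponential bound on `(0, z)` integrates to a Gamma function bound. Integrability of
`g` against `w ^ β` is not needed: the integrand is nonnegative, and the dominating function is
integrable on all of `(0, ∞)`. -/
theorem integral_mul_rpow_le_of_le_exp {g : ℝ → ℝ} {A r z β : ℝ} (hA : 0 ≤ A) (hr : 0 < r)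
    (hz : 0 ≤ z) (hβ : -1 < β) (hg0 : ∀ w ∈ Ioo 0 z, 0 ≤ g w)
    (hg : ∀ w ∈ Ioo 0 z, g w ≤ A * Real.exp (-(r * w))) :
    (∫ w in (0 : ℝ)..z, g w * w ^ β) ≤ A * Real.Gamma (β + 1) / r ^ (β + 1) := by
  have hint : IntegrableOn (fun w : ℝ => A * (w ^ β * Real.exp (-(r * w)))) (Ioi 0) := by
    have h := integrableOn_rpow_mul_exp_neg_mul_rpow hβ one_pos hr
    simp only [Real.rpow_one, neg_mul] at h
    exact h.const_mul A
  have hgamma : ∫ w in Ioi (0 : ℝ), A * (w ^ β * Real.exp (-(r * w))) =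
      A * Real.Gamma (β + 1) / r ^ (β + 1) := by
    have h := Real.integral_rpow_mul_exp_neg_mul_Ioi (a := β + 1) (by linarith) hr
    rw [add_sub_cancel_right] at h
    rw [integral_const_mul, h, Real.div_rpow zero_le_one hr.le, Real.one_rpow]
    ring
  rw [intervalIntegral.integral_of_le hz, integral_Ioc_eq_integral_Ioo, ← hgamma]
  calc ∫ w in Ioo 0 z, g w * w ^ β
      ≤ ∫ w in Ioo 0 z, A * (w ^ β * Real.exp (-(r * w))) := by
        refine integral_mono_of_nonneg ?_ (hint.mono_set Ioo_subset_Ioi_self) ?_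
        · filter_upwards [ae_restrict_mem measurableSet_Ioo] with w hw
          exact mul_nonneg (hg0 w hw) (Real.rpow_nonneg hw.1.le β)
        · filter_upwards [ae_restrict_mem measurableSet_Ioo] with w hw
          have h := mul_le_mul_of_nonneg_right (hg w hw) (Real.rpow_nonneg hw.1.le β)
          linarith
    _ ≤ ∫ w in Ioi (0 : ℝ), A * (w ^ β * Real.exp (-(r * w))) := by
        refine setIntegral_mono_set hint ?_ Ioo_subset_Ioi_self.eventuallyLE
        filter_upwards [ae_restrict_mem measurableSet_Ioi] with w hw
        exact mul_nonneg hA (mul_nonneg (Real.rpow_nonneg (le_of_lt hw) β) (Real.exp_pos _).le)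

/-- For a convex degeneracy profile (`F' < 0` nondecreasing) with `f = exp(−F)`:
(a) `f(z−w) ≤ f(z)·exp(F'(z)·w)` for `0 ≤ w < z`; and
(b) for `β > −1`, `∫₀^z f(z−w)·w^β dw ≤ f(z)·Γ(β+1)/(−F'(z))^{β+1}`. -/
theorem convex_profile_integral_bound (R : ℝ) (hR : 0 < R) (F F' : ℝ → ℝ)
    (hderiv : ∀ x ∈ Set.Ioo (0 : ℝ) R, HasDerivAt F (F' x) x)
    (hneg : ∀ x ∈ Set.Ioo (0 : ℝ) R, F' x < 0)
    (hconv : ∀ x ∈ Set.Ioo (0 : ℝ) R, ∀ y ∈ Set.Ioo (0 : ℝ) R, x ≤ y → F' x ≤ F' y)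
    (z : ℝ) (hz : z ∈ Set.Ioo (0 : ℝ) R) :
    (∀ w : ℝ, 0 ≤ w → w < z →
      Real.exp (-F (z - w)) ≤ Real.exp (-F z) * Real.exp (F' z * w)) ∧
    ∀ β : ℝ, -1 < β →
      (∫ w in (0 : ℝ)..z, Real.exp (-F (z - w)) * w ^ β) ≤
        Real.exp (-F z) * Real.Gamma (β + 1) / (-F' z) ^ (β + 1) := by
  have hpt : ∀ w : ℝ, 0 ≤ w → w < z →
      Real.exp (-F (z - w)) ≤ Real.exp (-F z) * Real.exp (F' z * w) := by
    intro w hw hwz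
    rw [← Real.exp_add, Real.exp_le_exp]
    rcases hw.eq_or_lt with rfl | hw
    · simp
    have hmem : ∀ x ∈ Set.Icc (z - w) z, x ∈ Set.Ioo (0 : ℝ) R := fun x hx =>
      ⟨by linarith [hx.1], hx.2.trans_lt hz.2⟩
    obtain ⟨c, hc, hslope⟩ := exists_hasDerivAt_eq_slope F F' (sub_lt_self z hw)
      (fun x hx => (hderiv x (hmem x hx)).continuousAt.continuousWithinAt)
      (fun x hx => hderiv x (hmem x (Set.Ioo_subset_Icc_self hx)))
    have hle := hconv c (hmem c (Set.Ioo_subset_Icc_self hc)) z hz hc.2.le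
    rw [hslope, sub_sub_cancel, div_le_iff₀ hw] at hle
    linarith
  refine ⟨hpt, fun β hβ => ?_⟩
  refine integral_mul_rpow_le_of_le_exp (Real.exp_pos _).le (neg_pos.mpr (hneg z hz)) hz.1.le hβ
    (fun w _ => (Real.exp_pos _).le) fun w hw => ?_
  simpa using hpt w hw.1.le hw.2
end

section
/- Let N ≥ 1, ε ∈ (0,1), r₀ > 0, and let F : (0,r₀] → ℝ be twice differentiable with F'(s) < 0 and F''(s) ≤ (1 + (1−ε)/N)·(−F'(s))/s for all s ∈ (0,r₀]. Then s ↦ (−F'(s))·s^{1/N} is integrable on (0,r₀) and ∫₀^{r₀} (−F'(s))·s^{1/N} ds ≤ (N/ε)·(−F'(r₀))·r₀^{1 + 1/N}. -/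
/-!
Put `a = 1 + (1-ε)/N`. The differential inequality says exactly that `s ^ a * (-F' s)` has nonnegative
derivative, hence is monotone on `(0, r₀]` (`rpow_mul_monotoneOn`). Comparing with its value at `r₀`,
`(-F' s) * s ^ (1/N) ≤ r₀ ^ a * (-F' r₀) * s ^ (ε/N - 1)`, because `1/N - a = ε/N - 1`. This exponent
exceeds `-1`, so the right-hand side is integrable up to `0`, and its integral over `(0, r₀)` is
`(N/ε) * (-F' r₀) * r₀ ^ (a + ε/N)`, where `a + ε/N = 1 + 1/N`.
-/

/-- `s ^ a` is the integrating factor of the inequality `g' + a * g / s ≤ 0`. -/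
theorem rpow_mul_monotoneOn (a r₀ : ℝ) (g g' : ℝ → ℝ)
    (hd : ∀ s ∈ Set.Ioc (0 : ℝ) r₀, HasDerivAt g (g' s) s)
    (hg : ∀ s ∈ Set.Ioc (0 : ℝ) r₀, g' s ≤ a * (-g s) / s) :
    MonotoneOn (fun s => s ^ a * (-g s)) (Set.Ioc 0 r₀) := by
  have hder : ∀ s ∈ Set.Ioc (0 : ℝ) r₀, HasDerivAt (fun s => s ^ a * (-g s))
      (a * s ^ (a - 1) * (-g s) + s ^ a * (-g' s)) s := fun s hs =>
    (Real.hasDerivAt_rpow_const (Or.inl hs.1.ne')).mul (hd s hs).neg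
  refine monotoneOn_of_hasDerivWithinAt_nonneg (convex_Ioc 0 r₀)
    (fun s hs => (hder s hs).continuousAt.continuousWithinAt)
    (fun s hs => (hder s (interior_subset hs)).hasDerivWithinAt) ?_
  intro s hs
  have hs := interior_subset hs
  have h1 := mul_le_mul_of_nonneg_left (hg s hs) (Real.rpow_nonneg hs.1.le a)
  have h2 : s ^ a * (a * (-g s) / s) = a * s ^ (a - 1) * (-g s) := by
    rw [Real.rpow_sub_one hs.1.ne']
    ring
  linarith


/-- Under the differential inequality `F'' ≤ (1 + (1−ε)/N)·(−F')/s` on `(0,r₀]`,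
the function `s ↦ (−F'(s))·s^{1/N}` is integrable on `(0,r₀)` and
`∫₀^{r₀} (−F'(s))·s^{1/N} ds ≤ (N/ε)·(−F'(r₀))·r₀^{1+1/N}`. -/
theorem Fprime_rpow_integral_bound (N ε r₀ : ℝ) (hN : 1 ≤ N)
    (hε : ε ∈ Set.Ioo (0 : ℝ) 1) (hr : 0 < r₀) (F F' F'' : ℝ → ℝ)
    (hd1 : ∀ s ∈ Set.Ioc (0 : ℝ) r₀, HasDerivAt F (F' s) s)
    (hd2 : ∀ s ∈ Set.Ioc (0 : ℝ) r₀, HasDerivAt F' (F'' s) s)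
    (hneg : ∀ s ∈ Set.Ioc (0 : ℝ) r₀, F' s < 0)
    (hF'' : ∀ s ∈ Set.Ioc (0 : ℝ) r₀, F'' s ≤ (1 + (1 - ε) / N) * (-F' s) / s) :
    MeasureTheory.IntegrableOn (fun s => (-F' s) * s ^ (1 / N)) (Set.Ioo 0 r₀) ∧
      (∫ s in (0 : ℝ)..r₀, (-F' s) * s ^ (1 / N)) ≤
        (N / ε) * (-F' r₀) * r₀ ^ (1 + 1 / N) := by
  obtain ⟨hε0, hε1⟩ := hε
  have hN0 : 0 < N := by linarith
  set a : ℝ := 1 + (1 - ε) / N with ha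
  have hmono := rpow_mul_monotoneOn a r₀ F' F'' hd2 hF''
  have hb : -1 < ε / N - 1 := by
    have := div_pos hε0 hN0
    linarith
  have hexp : 1 / N = a + (ε / N - 1) := by
    rw [ha]
    ring
  have hbound : ∀ s ∈ Set.Ioc (0 : ℝ) r₀,
      (-F' s) * s ^ (1 / N) ≤ r₀ ^ a * (-F' r₀) * s ^ (ε / N - 1) := by
    intro s hs
    have h := hmono hs ⟨hr, le_rfl⟩ hs.2
    have h' := mul_le_mul_of_nonneg_right h (Real.rpow_nonneg hs.1.le (ε / N - 1))
    rw [hexp, Real.rpow_add hs.1]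
    simp only at h'
    linarith
  have hmaj : IntervalIntegrable (fun s : ℝ => r₀ ^ a * (-F' r₀) * s ^ (ε / N - 1))
      MeasureTheory.volume 0 r₀ :=
    (intervalIntegral.intervalIntegrable_rpow' hb).const_mul _
  have hcont : ContinuousOn (fun s => (-F' s) * s ^ (1 / N)) (Set.Ioc 0 r₀) := fun s hs =>
    ((hd2 s hs).continuousAt.neg.mul
      (Real.continuousAt_rpow_const s _ (Or.inl hs.1.ne'))).continuousWithinAt
  have hint : MeasureTheory.IntegrableOn (fun s => (-F' s) * s ^ (1 / N)) (Set.Ioc 0 r₀) := by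
    refine MeasureTheory.Integrable.mono'
      ((intervalIntegrable_iff_integrableOn_Ioc_of_le hr.le).1 hmaj)
      (hcont.aestronglyMeasurable measurableSet_Ioc) ?_
    filter_upwards [MeasureTheory.ae_restrict_mem measurableSet_Ioc] with s hs
    rw [Real.norm_of_nonneg (mul_nonneg (neg_nonneg.2 (hneg s hs).le)
      (Real.rpow_nonneg hs.1.le _))]
    exact hbound s hs
  refine ⟨hint.mono_set Set.Ioo_subset_Ioc_self, ?_⟩
  calc (∫ s in (0 : ℝ)..r₀, (-F' s) * s ^ (1 / N))
      ≤ ∫ s in (0 : ℝ)..r₀, r₀ ^ a * (-F' r₀) * s ^ (ε / N - 1) :=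
        intervalIntegral.integral_mono_on_of_le_Ioo hr.le
          ((intervalIntegrable_iff_integrableOn_Ioc_of_le hr.le).2 hint) hmaj
          fun s hs => hbound s (Set.Ioo_subset_Ioc_self hs)
    _ = (N / ε) * (-F' r₀) * r₀ ^ (1 + 1 / N) := by
        have he : 1 + 1 / N = a + ε / N := by
          rw [hexp]
          ring
        rw [intervalIntegral.integral_const_mul, integral_rpow (Or.inl hb), sub_add_cancel,
          Real.zero_rpow (div_pos hε0 hN0).ne', he, Real.rpow_add hr a (ε / N),
          sub_zero, div_div_eq_mul_div]
        ring
end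

section
/- Let N ≥ 1, ε ∈ (0,1), r₀ > 0, and let F : (0,r₀] → ℝ be twice differentiable with F'(s) < 0 and F''(s) ≤ (1 + (1−ε)/N)·(−F'(s))/s for all s ∈ (0,r₀]. Then x ↦ (F(x) − F(r₀))^N is integrable on (0,r₀) and ∫₀^{r₀} (F(x) − F(r₀))^N dx ≤ (N/ε)^N·(−F'(r₀))^N·r₀^{N+1}. -/
/-!
Write `u = F − F(r₀)`, `P = −F'(r₀)·r₀`, `c = N/ε` and `b = (1−ε)/N`.

The hypothesis on `F''` says exactly that `s ↦ −s·F'(s) − b·F(s)` is nondecreasing, so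
`−x·F'(x) ≤ P + b·u(x)` on `(0,r₀]` (`neg_mul_deriv_le`). Consequently
`(x·u^N)' = u^N + N·x·F'·u^(N−1) ≥ ε·u^N − N·P·u^(N−1)`, and after multiplication by `c`
the lower-order term `N·(cP)·u^(N−1)` is absorbed by Young's inequality, which leaves the pointwise
bound `u^N ≤ (c·x·u^N + (cP)^N·x)'`.

Integrating over `[δ,r₀]` and using `u(r₀) = 0`, `u ≥ 0` gives `∫_δ^{r₀} u^N ≤ (cP)^N·r₀` for every
`δ > 0` (`integral_rpow_le`). The bound is uniform in `δ`, so integrability on `(0,r₀]` and the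
estimate follow by letting `δ → 0`. This replaces Minkowski's integral inequality and gives
the same constant.
-/

open MeasureTheory Set Filter Topology

/-- Young's inequality in a form that remains valid at the endpoint exponent `N = 1`. -/
lemma young_rpow_sub_one {N a u : ℝ} (hN : 1 ≤ N) (ha : 0 ≤ a) (hu : 0 ≤ u) :
    N * (a * u ^ (N - 1)) ≤ a ^ N + (N - 1) * u ^ N := by
  have hN0 : 0 < N := by linarith
  have hw : 0 ≤ 1 - 1 / N := by
    rw [sub_nonneg, div_le_one hN0]
    exact hN
  have h := Real.geom_mean_le_arith_mean2_weighted (w₁ := 1 / N) (w₂ := 1 - 1 / N)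
    (p₁ := a ^ N) (p₂ := u ^ N) (by positivity) hw (by positivity) (by positivity) (by ring)
  rw [← Real.rpow_mul ha, ← Real.rpow_mul hu, mul_one_div_cancel hN0.ne', Real.rpow_one,
    show N * (1 - 1 / N) = N - 1 by field_simp] at h
  calc N * (a * u ^ (N - 1)) ≤ N * (1 / N * a ^ N + (1 - 1 / N) * u ^ N) := by gcongr
    _ = a ^ N + (N - 1) * u ^ N := by field_simp

/-- The second-order inequality, integrated once: `s ↦ −s·F'(s) − b·F(s)` is nondecreasing. -/
lemma neg_mul_deriv_le {b r₀ : ℝ} {F F' F'' : ℝ → ℝ}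
    (hd1 : ∀ s ∈ Ioc (0 : ℝ) r₀, HasDerivAt F (F' s) s)
    (hd2 : ∀ s ∈ Ioc (0 : ℝ) r₀, HasDerivAt F' (F'' s) s)
    (hF'' : ∀ s ∈ Ioc (0 : ℝ) r₀, F'' s ≤ (1 + b) * (-F' s) / s)
    {x : ℝ} (hx : x ∈ Ioc (0 : ℝ) r₀) :
    -(x * F' x) ≤ -F' r₀ * r₀ + b * (F x - F r₀) := by
  have hd : ∀ s ∈ Ioc (0 : ℝ) r₀, HasDerivAt (fun s => -(s * F' s) - b * F s)
      (-(1 * F' s + s * F'' s) - b * F' s) s := fun s hs =>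
    (((hasDerivAt_id' s).mul (hd2 s hs)).neg).sub ((hd1 s hs).const_mul b)
  have hmono : MonotoneOn (fun s => -(s * F' s) - b * F s) (Ioc 0 r₀) := by
    refine monotoneOn_of_deriv_nonneg (convex_Ioc 0 r₀)
      (fun s hs => (hd s hs).continuousAt.continuousWithinAt)
      (fun s hs => (hd s (interior_subset hs)).differentiableAt.differentiableWithinAt) ?_
    intro s hs
    have hs' := interior_subset hs
    rw [(hd s hs').deriv]
    have h := hF'' s hs'
    rw [le_div_iff₀ hs'.1] at h
    linarith
  have := hmono hx ⟨hx.1.trans_le hx.2, le_rfl⟩ hx.2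
  dsimp only at this
  linarith

lemma sub_nonneg_of_deriv_neg {r₀ : ℝ} {F F' : ℝ → ℝ}
    (hd1 : ∀ s ∈ Ioc (0 : ℝ) r₀, HasDerivAt F (F' s) s)
    (hneg : ∀ s ∈ Ioc (0 : ℝ) r₀, F' s < 0) {x : ℝ} (hx : x ∈ Ioc (0 : ℝ) r₀) :
    0 ≤ F x - F r₀ := by
  have hanti : AntitoneOn F (Ioc 0 r₀) := by
    refine antitoneOn_of_deriv_nonpos (convex_Ioc 0 r₀)
      (fun s hs => (hd1 s hs).continuousAt.continuousWithinAt)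
      (fun s hs => (hd1 s (interior_subset hs)).differentiableAt.differentiableWithinAt) ?_
    intro s hs
    rw [(hd1 s (interior_subset hs)).deriv]
    exact (hneg s (interior_subset hs)).le
  exact sub_nonneg.2 (hanti hx ⟨hx.1.trans_le hx.2, le_rfl⟩ hx.2)

lemma continuousOn_sub_rpow {N r₀ : ℝ} (hN : 1 ≤ N) {F F' : ℝ → ℝ}
    (hd1 : ∀ s ∈ Ioc (0 : ℝ) r₀, HasDerivAt F (F' s) s) :
    ContinuousOn (fun x => (F x - F r₀) ^ N) (Ioc 0 r₀) := fun s hs =>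
  (((hd1 s hs).sub_const (F r₀)).rpow_const (Or.inr hN)).continuousAt.continuousWithinAt

/-- The truncated estimate, uniform in the lower endpoint `δ > 0`. -/
lemma integral_rpow_le {N ε r₀ : ℝ} (hN : 1 ≤ N) (hε : 0 < ε) {F F' F'' : ℝ → ℝ}
    (hd1 : ∀ s ∈ Ioc (0 : ℝ) r₀, HasDerivAt F (F' s) s)
    (hd2 : ∀ s ∈ Ioc (0 : ℝ) r₀, HasDerivAt F' (F'' s) s)
    (hneg : ∀ s ∈ Ioc (0 : ℝ) r₀, F' s < 0)
    (hF'' : ∀ s ∈ Ioc (0 : ℝ) r₀, F'' s ≤ (1 + (1 - ε) / N) * (-F' s) / s)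
    {δ : ℝ} (hδ : δ ∈ Ioc (0 : ℝ) r₀) :
    (∫ x in δ..r₀, (F x - F r₀) ^ N) ≤ (N / ε * (-F' r₀ * r₀)) ^ N * r₀ := by
  have hN0 : 0 < N := by linarith
  have hr : r₀ ∈ Ioc (0 : ℝ) r₀ := ⟨hδ.1.trans_le hδ.2, le_rfl⟩
  set P := -F' r₀ * r₀ with hP
  have hP0 : 0 ≤ P := mul_nonneg (by linarith [hneg r₀ hr]) hr.1.le
  set K := (N / ε * P) ^ N with hK
  have hK0 : 0 ≤ K := by positivity
  have hsub : Icc δ r₀ ⊆ Ioc 0 r₀ := fun s hs => ⟨hδ.1.trans_le hs.1, hs.2⟩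
  have hd : ∀ s ∈ Ioc (0 : ℝ) r₀,
      HasDerivAt (fun x => N / ε * (x * (F x - F r₀) ^ N) + K * x)
        (N / ε * (1 * (F s - F r₀) ^ N + s * (F' s * N * (F s - F r₀) ^ (N - 1))) + K * 1) s :=
    fun s hs => (((hasDerivAt_id' s).mul
      (((hd1 s hs).sub_const (F r₀)).rpow_const (Or.inr hN))).const_mul _).add
        ((hasDerivAt_id' s).const_mul K)
  have key := intervalIntegral.integral_le_sub_of_hasDeriv_right_of_le hδ.2
    (fun s hs => (hd s (hsub hs)).continuousAt.continuousWithinAt)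
    (fun s hs => (hd s (hsub (Ioo_subset_Icc_self hs))).hasDerivWithinAt)
    (((continuousOn_sub_rpow hN hd1).mono hsub).integrableOn_Icc (μ := volume)) (by
      intro s hs
      have hs' := hsub (Ioo_subset_Icc_self hs)
      have hu := sub_nonneg_of_deriv_neg hd1 hneg hs'
      have h1 := neg_mul_deriv_le hd1 hd2 hF'' hs'
      rw [← hP] at h1
      set u := F s - F r₀ with hu_def
      have hY := young_rpow_sub_one hN (by positivity : 0 ≤ N / ε * P) hu
      rw [← hK] at hY
      have hpow : u ^ (N - 1) * u = u ^ N := by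
        rw [← Real.rpow_add_one' hu (by linarith), sub_add_cancel]
      have hq : 0 ≤ N / ε * N * u ^ (N - 1) := by positivity
      have h2 := mul_le_mul_of_nonneg_left h1 hq
      have h3 : N / ε * N * u ^ (N - 1) * (P + (1 - ε) / N * u)
          = N * (N / ε * P * u ^ (N - 1)) + (N / ε - N) * u ^ N := by
        rw [← hpow]
        field_simp
      linarith)
  have hu := sub_nonneg_of_deriv_neg hd1 hneg hδ
  have h0 : 0 ≤ N / ε * (δ * (F δ - F r₀) ^ N) := by
    have := hδ.1.le
    positivity
  have h1 : 0 ≤ K * δ := mul_nonneg hK0 hδ.1.le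
  simp only [sub_self, Real.zero_rpow hN0.ne', mul_zero, zero_add] at key
  linarith

/-- Under the differential inequality `F'' ≤ (1 + (1−ε)/N)·(−F')/s` on `(0,r₀]`,
the function `x ↦ (F(x) − F(r₀))^N` is integrable on `(0,r₀)` and
`∫₀^{r₀} (F(x) − F(r₀))^N dx ≤ (N/ε)^N·(−F'(r₀))^N·r₀^{N+1}`. -/
theorem F_difference_rpow_integral_bound (N ε r₀ : ℝ) (hN : 1 ≤ N)
    (hε : ε ∈ Set.Ioo (0 : ℝ) 1) (hr : 0 < r₀) (F F' F'' : ℝ → ℝ)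
    (hd1 : ∀ s ∈ Set.Ioc (0 : ℝ) r₀, HasDerivAt F (F' s) s)
    (hd2 : ∀ s ∈ Set.Ioc (0 : ℝ) r₀, HasDerivAt F' (F'' s) s)
    (hneg : ∀ s ∈ Set.Ioc (0 : ℝ) r₀, F' s < 0)
    (hF'' : ∀ s ∈ Set.Ioc (0 : ℝ) r₀, F'' s ≤ (1 + (1 - ε) / N) * (-F' s) / s) :
    MeasureTheory.IntegrableOn (fun x => (F x - F r₀) ^ N) (Set.Ioo 0 r₀) ∧
      (∫ x in (0 : ℝ)..r₀, (F x - F r₀) ^ N) ≤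
        (N / ε) ^ N * (-F' r₀) ^ N * r₀ ^ (N + 1) := by
  have hbound := fun δ hδ => integral_rpow_le (δ := δ) hN hε.1 hd1 hd2 hneg hF'' hδ
  have hF0 : 0 ≤ -F' r₀ := by linarith [hneg r₀ ⟨hr, le_rfl⟩]
  have hNε : 0 ≤ N / ε := div_nonneg (by linarith) hε.1.le
  have hconst : (N / ε * (-F' r₀ * r₀)) ^ N * r₀
      = (N / ε) ^ N * (-F' r₀) ^ N * r₀ ^ (N + 1) := by
    rw [Real.mul_rpow hNε (by positivity), Real.mul_rpow hF0 hr.le, Real.rpow_add_one hr.ne']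
    ring
  rw [hconst] at hbound
  -- Truncation points decreasing to `0`.
  let a : ℕ → ℝ := fun n => r₀ * (1 / ((n : ℝ) + 1))
  have ha : ∀ n, a n ∈ Ioc (0 : ℝ) r₀ := fun n => by
    refine ⟨by positivity, mul_le_of_le_one_right hr.le ?_⟩
    rw [div_le_one (by positivity)]
    linarith [(Nat.cast_nonneg n : (0 : ℝ) ≤ n)]
  have ha0 : Tendsto a atTop (𝓝 0) := by
    simpa [a] using (tendsto_one_div_add_atTop_nhds_zero_nat (𝕜 := ℝ)).const_mul r₀
  have hint : IntegrableOn (fun x => (F x - F r₀) ^ N) (Ioc 0 r₀) := by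
    refine integrableOn_Ioc_of_intervalIntegral_norm_bounded_left (l := atTop) (a := a)
      (fun n => ?_) ha0 (Eventually.of_forall fun n => ?_)
      (I := (N / ε) ^ N * (-F' r₀) ^ N * r₀ ^ (N + 1))
    · exact (((continuousOn_sub_rpow hN hd1).mono fun s hs =>
        ⟨(ha n).1.trans_le hs.1, hs.2⟩).integrableOn_Icc).mono_set Ioc_subset_Icc_self
    · refine le_of_eq_of_le ?_ (hbound (a n) (ha n))
      rw [intervalIntegral.integral_of_le (ha n).2]
      refine setIntegral_congr_fun measurableSet_Ioc fun s hs => ?_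
      exact Real.norm_of_nonneg (Real.rpow_nonneg
        (sub_nonneg_of_deriv_neg hd1 hneg ⟨(ha n).1.trans hs.1, hs.2⟩) _)
  refine ⟨hint.mono_set Ioo_subset_Ioc_self, ?_⟩
  have hcont : ContinuousOn (fun x => ∫ t in x..r₀, (F t - F r₀) ^ N) (Icc 0 r₀) := by
    rw [← uIcc_of_le hr.le]
    refine intervalIntegral.continuousOn_primitive_interval_left ?_
    rw [uIcc_of_le hr.le, integrableOn_Icc_iff_integrableOn_Ioc]
    exact hint
  have hlim := (hcont 0 ⟨le_rfl, hr.le⟩).tendsto.comp (tendsto_nhdsWithin_iff.2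
    ⟨ha0, Eventually.of_forall fun n => Ioc_subset_Icc_self (ha n)⟩)
  exact le_of_tendsto' hlim fun n => hbound (a n) (ha n)
end

section
/- Let N > 0, c > 0, r₀ > 0, and let F : (0,r₀] → ℝ be twice differentiable with F'(x) < 0 and 0 ≤ F''(x) ≤ c·(−F'(x))/x for all x ∈ (0,r₀]. Then for every y ∈ (0,r₀]: y·(log((−F'(y))/(−F'(r₀))))^N ≤ c^N·(N/e)^N·r₀. (Note that since F'' ≥ 0 the ratio (−F'(y))/(−F'(r₀)) is ≥ 1 for y ≤ r₀, so the logarithm is nonnegative.) -/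
/-!
The hypothesis `F'' ≤ c·(−F')/x` says that `x ↦ log (−F' x) + c·log x` has nonnegative derivative,
so comparing its values at `y` and `r₀` gives `log (F' y / F' r₀) ≤ c·t` with `t = log (r₀ / y)`
(`log_ratio_le`). The left side is nonnegative because `F'` is increasing, so the `N`-th power
preserves the inequality. It remains to see that `y·t^N = r₀·t^N·e^{-t}` is at most `(N/e)^N·r₀`,
the maximum of `t^N·e^{-t}` being attained at `t = N` (`rpow_le_mul_exp`).
-/

/-- The bound `t ^ N * e⁻ᵗ ≤ (N / e) ^ N`; it is the `N`-th power of `s ≤ e ^ (s - 1)`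
at `s = t / N`. -/
lemma rpow_le_mul_exp {N t : ℝ} (hN : 0 < N) (ht : 0 ≤ t) :
    t ^ N ≤ (N / Real.exp 1) ^ N * Real.exp t := by
  have h1 : t / N ≤ Real.exp (t / N - 1) := by
    linarith [Real.add_one_le_exp (t / N - 1)]
  have h2 : t ≤ N / Real.exp 1 * Real.exp (t / N) := by
    rw [Real.exp_sub, div_le_iff₀ hN] at h1
    calc t ≤ _ := h1
      _ = _ := by ring
  calc t ^ N ≤ (N / Real.exp 1 * Real.exp (t / N)) ^ N :=
        Real.rpow_le_rpow ht h2 hN.le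
    _ = (N / Real.exp 1) ^ N * Real.exp t := by
        rw [Real.mul_rpow (by positivity) (by positivity), ← Real.exp_mul,
          div_mul_cancel₀ _ hN.ne']

/-- A Grönwall-type estimate: for positive `G`, the bound `-G' ≤ c·G/x` makes
`log G + c·log` nondecreasing. -/
lemma log_ratio_le {c r : ℝ} {G G' : ℝ → ℝ} (hd : ∀ x ∈ Set.Ioc (0 : ℝ) r, HasDerivAt G (G' x) x)
    (hpos : ∀ x ∈ Set.Ioc (0 : ℝ) r, 0 < G x)
    (hG : ∀ x ∈ Set.Ioc (0 : ℝ) r, -G' x ≤ c * G x / x) {y : ℝ} (hy : y ∈ Set.Ioc (0 : ℝ) r) :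
    Real.log (G y / G r) ≤ c * Real.log (r / y) := by
  have hr : r ∈ Set.Ioc (0 : ℝ) r := ⟨hy.1.trans_le hy.2, le_rfl⟩
  have hL : ∀ x ∈ Set.Ioc (0 : ℝ) r,
      HasDerivAt (fun x => Real.log (G x) + c * Real.log x) (G' x / G x + c * x⁻¹) x :=
    fun x hx => ((hd x hx).log (hpos x hx).ne').add
      ((Real.hasDerivAt_log hx.1.ne').const_mul c)
  have hmono : MonotoneOn (fun x => Real.log (G x) + c * Real.log x) (Set.Ioc 0 r) := by
    refine monotoneOn_of_hasDerivWithinAt_nonneg (convex_Ioc 0 r)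
      (fun x hx => (hL x hx).continuousAt.continuousWithinAt)
      (fun x hx => (hL x (interior_subset hx)).hasDerivWithinAt) fun x hx => ?_
    have hx := interior_subset hx
    have hp := hpos x hx
    have h : -G' x / G x ≤ c * x⁻¹ := by
      rw [div_le_iff₀ hp]
      calc _ ≤ _ := hG x hx
        _ = _ := by ring
    rw [neg_div] at h
    linarith
  have h := hmono hy hr hy.2
  rw [Real.log_div (hpos y hy).ne' (hpos r hr).ne', Real.log_div hr.1.ne' hy.1.ne']
  dsimp only at h
  linarith

/-- Under `0 ≤ F'' ≤ c·(−F')/x` on `(0,r₀]`, for every `y ∈ (0,r₀]`,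
`y·(log((−F'(y))/(−F'(r₀))))^N ≤ c^N·(N/e)^N·r₀`. -/
theorem log_Fprime_ratio_bound (N c r₀ : ℝ) (hN : 0 < N) (hc : 0 < c) (hr : 0 < r₀)
    (F F' F'' : ℝ → ℝ)
    (hd1 : ∀ x ∈ Set.Ioc (0 : ℝ) r₀, HasDerivAt F (F' x) x)
    (hd2 : ∀ x ∈ Set.Ioc (0 : ℝ) r₀, HasDerivAt F' (F'' x) x)
    (hneg : ∀ x ∈ Set.Ioc (0 : ℝ) r₀, F' x < 0)
    (hF''nn : ∀ x ∈ Set.Ioc (0 : ℝ) r₀, 0 ≤ F'' x)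
    (hF'' : ∀ x ∈ Set.Ioc (0 : ℝ) r₀, F'' x ≤ c * (-F' x) / x) :
    ∀ y ∈ Set.Ioc (0 : ℝ) r₀,
      y * Real.log ((-F' y) / (-F' r₀)) ^ N ≤ c ^ N * (N / Real.exp 1) ^ N * r₀ := by
  intro y hy
  have hr₀ : r₀ ∈ Set.Ioc (0 : ℝ) r₀ := ⟨hr, le_rfl⟩
  have hy0 := hy.1
  have hmono : MonotoneOn F' (Set.Ioc 0 r₀) :=
    monotoneOn_of_hasDerivWithinAt_nonneg (convex_Ioc 0 r₀)
      (fun x hx => (hd2 x hx).continuousAt.continuousWithinAt)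
      (fun x hx => (hd2 x (interior_subset hx)).hasDerivWithinAt)
      fun x hx => hF''nn x (interior_subset hx)
  have hlog0 : 0 ≤ Real.log ((-F' y) / (-F' r₀)) := by
    apply Real.log_nonneg
    rw [one_le_div (neg_pos.2 (hneg r₀ hr₀))]
    exact neg_le_neg (hmono hy hr₀ hy.2)
  have hlog : Real.log ((-F' y) / (-F' r₀)) ≤ c * Real.log (r₀ / y) :=
    log_ratio_le (G := fun x => -F' x) (G' := fun x => -F'' x) (fun x hx => (hd2 x hx).neg)
      (fun x hx => neg_pos.2 (hneg x hx)) (fun x hx => by simpa using hF'' x hx) hy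
  have ht : 0 ≤ Real.log (r₀ / y) := Real.log_nonneg ((one_le_div hy0).2 hy.2)
  calc y * Real.log ((-F' y) / (-F' r₀)) ^ N
      ≤ y * (c * Real.log (r₀ / y)) ^ N := by gcongr
    _ = y * (c ^ N * Real.log (r₀ / y) ^ N) := by rw [Real.mul_rpow hc.le ht]
    _ ≤ y * (c ^ N * ((N / Real.exp 1) ^ N * Real.exp (Real.log (r₀ / y)))) := by
        gcongr
        exact rpow_le_mul_exp hN ht
    _ = c ^ N * (N / Real.exp 1) ^ N * r₀ := by
        rw [Real.exp_log (by positivity)]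
        field_simp
end

section
/- Let δ > 0, C ≥ 1, and let g : ℝ → [0,∞) be a measurable function with g(x) ≤ C·exp(−δ/|x|) for all x ∈ [−1,1] with x ≠ 0. Then there exist constants C₂ > 0 and η₀ > 1 such that for every real η with |η| ≥ η₀ there exists a smooth, compactly supported function φ on (−1,1), not identically zero, satisfying ∫_{−1}^{1} φ'(x)² dx + η²·∫_{−1}^{1} g(x)·φ(x)² dx ≤ C₂·(log|η|)²·∫_{−1}^{1} φ(x)² dx. -/
/-!
The trial function is a rescaled bump `φ x = ψ (k x)` with `k = 2 log|η| / δ`, where `ψ` is a fixed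
bump supported in `[-1, 1]`. On its support `|x| ≤ 1/k`, hence
`g x ≤ C exp (-δ k) = C exp (-2 log|η|) = C / η²`, and the potential term is at most `C ∫ φ²`.
By scaling the kinetic term is `k² (∫ ψ'² / ∫ ψ²) ∫ φ²`, which is a constant times
`(log|η|)² ∫ φ²`.
-/

/-- On the support of the trial function the potential `η² g` is at most `C`. -/
lemma potential_le {δ C η x G : ℝ} (hδ : 0 < δ) (hC : 1 ≤ C) (hη : 1 < |η|)
    (hx : x ≠ 0) (hxk : |2 * Real.log |η| / δ * x| < 1)
    (hG : G ≤ C * Real.exp (-δ / |x|)) : η ^ 2 * G ≤ C := by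
  have hL : 0 < Real.log |η| := Real.log_pos hη
  have hx0 : 0 < |x| := abs_pos.mpr hx
  have h1 : -δ / |x| ≤ -(2 * Real.log |η|) := by
    rw [div_le_iff₀ hx0]
    rw [abs_mul, abs_of_pos (by positivity), div_mul_eq_mul_div, div_lt_one hδ] at hxk
    linarith
  have h2 : η ^ 2 = Real.exp (2 * Real.log |η|) := by
    rw [two_mul, Real.exp_add, Real.exp_log (by linarith), abs_mul_abs_self, sq]
  calc η ^ 2 * G ≤ η ^ 2 * (C * Real.exp (-(2 * Real.log |η|))) := by
        gcongr
        exact hG.trans (by gcongr)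
    _ = C := by
        rw [h2, mul_left_comm, ← Real.exp_add, add_neg_cancel, Real.exp_zero, mul_one]

/-- For `k > 1`, a function of `k x` whose profile vanishes off `(-1, 1)` has integral over
`[-1, 1]` equal to `k⁻¹` times the full integral of the profile. -/
lemma integral_scaled {f : ℝ → ℝ} {k : ℝ} (hk : 1 < k)
    (hf : ∀ y, 1 ≤ |y| → f y = 0) :
    ∫ x in (-1 : ℝ)..1, f (k * x) = k⁻¹ * ∫ y, f y := by
  rw [intervalIntegral.integral_eq_integral_of_support_subset,
    MeasureTheory.Measure.integral_comp_mul_left, abs_of_pos (by positivity), smul_eq_mul]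
  intro x hx
  by_contra hx'
  refine hx (hf _ ?_)
  have : 1 ≤ |x| := by
    by_contra! h
    exact hx' ⟨(abs_lt.mp h).1, (abs_lt.mp h).2.le⟩
  rw [abs_mul, abs_of_pos (by linarith)]
  nlinarith


/-- Eigenvalue bound for `L_η = −d²/dx² + g(x)η²` with Dirichlet conditions on `(−1,1)`:
if `0 ≤ g(x) ≤ C·exp(−δ/|x|)` on `[−1,1] \ {0}`, then there are `C₂ > 0` and `η₀ > 1`
such that for every `|η| ≥ η₀` there is a nonzero smooth compactly supported `φ` in
`(−1,1)` with
`∫φ'² + η²∫g·φ² ≤ C₂·(log|η|)²·∫φ²`. -/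
theorem rayleigh_quotient_bound (δ C : ℝ) (hδ : 0 < δ) (hC : 1 ≤ C) (g : ℝ → ℝ)
    (hg : Measurable g) (hgnn : ∀ x, 0 ≤ g x)
    (hgdec : ∀ x : ℝ, x ∈ Set.Icc (-1 : ℝ) 1 → x ≠ 0 →
      g x ≤ C * Real.exp (-δ / |x|)) :
    ∃ C₂ : ℝ, 0 < C₂ ∧ ∃ η₀ : ℝ, 1 < η₀ ∧ ∀ η : ℝ, η₀ ≤ |η| →
      ∃ φ : ℝ → ℝ, ContDiff ℝ (⊤ : ℕ∞) φ ∧ HasCompactSupport φ ∧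
        tsupport φ ⊆ Set.Ioo (-1 : ℝ) 1 ∧ φ ≠ 0 ∧
        (∫ x in (-1 : ℝ)..1, deriv φ x ^ 2) +
            η ^ 2 * ∫ x in (-1 : ℝ)..1, g x * φ x ^ 2 ≤
          C₂ * Real.log |η| ^ 2 * ∫ x in (-1 : ℝ)..1, φ x ^ 2 := by
  let ψ : ContDiffBump (0 : ℝ) := ⟨1 / 4, 1 / 2, by norm_num, by norm_num⟩
  have hψs : ContDiff ℝ (⊤ : ℕ∞) ψ := ψ.contDiff
  have hts : tsupport ψ = Metric.closedBall 0 (1 / 2) := ψ.tsupport_eq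
  have hnot : ∀ y : ℝ, 1 ≤ |y| → y ∉ tsupport ψ := by
    intro y hy hmem
    rw [hts, mem_closedBall_zero_iff, Real.norm_eq_abs] at hmem
    linarith
  have hψ0 : ∀ y : ℝ, 1 ≤ |y| → ψ y = 0 := fun y hy => image_eq_zero_of_notMem_tsupport (hnot y hy)
  have hψ'0 : ∀ y : ℝ, 1 ≤ |y| → deriv ψ y = 0 := fun y hy => by
    by_contra h
    exact hnot y hy (support_deriv_subset h)
  set A : ℝ := ∫ y, deriv ψ y ^ 2 with hA
  set B : ℝ := ∫ y, ψ y ^ 2 with hB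
  have hA0 : 0 ≤ A := MeasureTheory.integral_nonneg fun y => sq_nonneg _
  have hψ1 : ψ 0 = 1 := ψ.one_of_mem_closedBall (by simp [ψ])
  have hB0 : 0 < B := by
    refine (hψs.continuous.pow 2).integral_pos_of_hasCompactSupport_nonneg_nonzero (x := 0)
      ?_ (fun y => sq_nonneg _) (by simp [hψ1])
    exact ψ.hasCompactSupport.comp_left (g := fun t : ℝ => t ^ 2) (by simp)
  refine ⟨4 * A / (δ ^ 2 * B) + C, by positivity, Real.exp (1 + δ),
    Real.one_lt_exp_iff.mpr (by linarith), fun η hη => ?_⟩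
  have hη1 : 1 < |η| := (Real.one_lt_exp_iff.mpr (by linarith)).trans_le hη
  have hL : 1 + δ ≤ Real.log |η| := (Real.le_log_iff_exp_le (by linarith)).mpr hη
  set k : ℝ := 2 * Real.log |η| / δ with hk
  have hk1 : 1 < k := by rw [hk, lt_div_iff₀ hδ]; linarith
  have hk0 : 0 < k := by linarith
  have hφs : ContDiff ℝ (⊤ : ℕ∞) (fun x : ℝ => ψ (k * x)) :=
    hψs.comp (contDiff_const.mul contDiff_id)
  have hsub : tsupport (fun x : ℝ => ψ (k * x)) ⊆ Metric.closedBall 0 (1 / 2) := by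
    refine closure_minimal (fun x hx => ?_) Metric.isClosed_closedBall
    have h : k * x ∈ tsupport ψ := subset_tsupport _ hx
    rw [hts, mem_closedBall_zero_iff, Real.norm_eq_abs, abs_mul, abs_of_pos hk0] at h
    rw [mem_closedBall_zero_iff, Real.norm_eq_abs]
    nlinarith [abs_nonneg x]
  refine ⟨fun x => ψ (k * x), hφs,
    (isCompact_closedBall (0 : ℝ) (1 / 2)).of_isClosed_subset (isClosed_tsupport _) hsub,
    fun x hx => ?_, fun h => ?_, ?_⟩
  · have := hsub hx
    rw [mem_closedBall_zero_iff, Real.norm_eq_abs, abs_le] at this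
    constructor <;> linarith [this.1, this.2]
  · have := congrFun h 0
    simp [hψ1] at this
  have hkin : ∫ x in (-1 : ℝ)..1, deriv (fun x => ψ (k * x)) x ^ 2 = k * A := by
    simp only [deriv_comp_mul_left, smul_eq_mul, mul_pow]
    rw [intervalIntegral.integral_const_mul,
      integral_scaled (f := fun y => deriv ψ y ^ 2) hk1 fun y hy => by simp [hψ'0 y hy], ← hA]
    field_simp
  have hmass : ∫ x in (-1 : ℝ)..1, ψ (k * x) ^ 2 = k⁻¹ * B :=
    integral_scaled (f := fun y => ψ y ^ 2) hk1 fun y hy => by simp [hψ0 y hy]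
  have hpot : η ^ 2 * ∫ x in (-1 : ℝ)..1, g x * ψ (k * x) ^ 2 ≤ C * (k⁻¹ * B) := by
    rw [← hmass, ← intervalIntegral.integral_const_mul, ← intervalIntegral.integral_const_mul,
      intervalIntegral.integral_of_le (by norm_num), intervalIntegral.integral_of_le (by norm_num)]
    -- Only the dominating function has to be integrable.
    refine MeasureTheory.integral_mono_of_nonneg
      (Filter.Eventually.of_forall fun x => by
        have := hgnn x
        positivity) ?_ ?_
    · exact ((continuous_const.mul (hφs.continuous.pow 2)).integrableOn_Icc
        (a := -1) (b := 1)).mono_set Set.Ioc_subset_Icc_self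
    · -- The decay bound says nothing at the origin, which is a null set.
      have hne : ∀ᵐ x ∂(MeasureTheory.volume.restrict (Set.Ioc (-1 : ℝ) 1)), x ≠ 0 :=
        MeasureTheory.ae_restrict_of_ae (MeasureTheory.Measure.ae_ne _ 0)
      filter_upwards [hne, MeasureTheory.ae_restrict_mem measurableSet_Ioc] with x hx0 hx
      rcases le_or_gt 1 |k * x| with h | h
      · simp [hψ0 _ h]
      · rw [← mul_assoc]
        exact mul_le_mul_of_nonneg_right (potential_le hδ hC hη1 hx0 h
          (hgdec x (Set.Ioc_subset_Icc_self hx) hx0)) (sq_nonneg _)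
  rw [hkin, hmass]
  have hL2 : 1 ≤ Real.log |η| ^ 2 := by nlinarith
  have hCB : C * (k⁻¹ * B) ≤ C * Real.log |η| ^ 2 * (k⁻¹ * B) := by
    gcongr
    nlinarith
  have hkA : 4 * A / (δ ^ 2 * B) * Real.log |η| ^ 2 * (k⁻¹ * B) = k * A := by
    have : 4 * Real.log |η| ^ 2 = k ^ 2 * δ ^ 2 := by rw [hk]; field_simp; ring
    field_simp
    linear_combination A * this
  linear_combination hpot + hCB - hkA
end
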